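/- arXiv:0808.0670 — 2 statements merged into one kernel-verified Lean document; each statement's English description precedes it below -/
import Mathlib

section
/- Let d = 1 and assume alternative (i) holds. For L ∈ ℕ, L ≥ 1, let ℙ_L be the uniform product measure on {−d_max, d_max}^L (each coordinate is ±d_max with probability 1/2 independently), and for ω ∈ {−d_max, d_max}^L define the Dirichlet ground-state energy λ_L^D(ω) := inf over nonzero ψ ∈ C_c^∞((1/2, L+1/2)) of (∫_{1/2}^{L+1/2} (ψ'(x)² + Σ_{i=1}^L q(x−i−ω_i) ψ(x)²) dx)/(∫_{1/2}^{L+1/2} ψ(x)² dx). Then there exist c₀ > 0, C > 0 and ε > 0 such that for every E ∈ (E₀, E₀+ε) there is L ∈ ℕ with 1 ≤ L ≤ C (log(E−E₀))² and ℙ_L( { ω : λ_L^D(ω) < E } ) ≥ c₀. -/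
/-!
Write `e = E₀(dmax)` for the lowest Neumann energy of a cell with extremal displacement.
Splitting the line into unit cells gives `e ≤ E₀` (`groundEnergy_ge`), so it suffices to find
Dirichlet test functions of energy below `e + η`, where `η = E - E₀`.

In one cell take a positive near-minimizer `f` that is constant near both ends
(`plateau_minimizer`). Its two boundary values cannot be nearly equal: a function with equal
boundary values is periodic, hence can be translated by `dmax`, which moves the scatterer to the
centre and forces energy at least `E₀(0) > e` (`periodic_energy`, `boundary_gap`). After a
reflection the ratio of the boundary values is therefore at least some `ρ > 1`, uniformly in the
accuracy of the near-minimizer (`good_profile`). As `q` is even, a cell with the opposite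
displacement carries the mirror image of `f`.

For a Bernoulli configuration these pieces, suitably scaled, fit together to a smooth function
of energy close to `e` in each cell (`lamD_chain`); the logarithm of its amplitude is a simple
random walk in the sign pattern. If the walk attains a height `K` above both its starting point
and its end point, cutting off in the two outermost cells costs a relative energy
`O(ρ ^ (-2 K))` (`lamD_walk`). With `K` of order `|log η|` (`exists_height`) this is less than
`η / 2`. By a Paley–Zygmund bound from the second and fourth moments, a walk of `2 K²` steps
climbs by at least `K` with probability at least `1 / 24` (`card_upSet`), so two consecutive
blocks of `2 K²` steps give an up-and-down walk with probability at least `1 / 576`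
(`walk_count`) on a chain of length `4 K² + 2 = O(log² η)`.
-/

open MeasureTheory Set

noncomputable section

/-- The potential of a 1-d displacement configuration `ω : ℤ → ℝ`:
`V_ω(x) = ∑_{i ∈ ℤ} q(x - i - ω_i)`. -/
def Vpot1 (q : ℝ → ℝ) (ω : ℤ → ℝ) (x : ℝ) : ℝ := ∑' i : ℤ, q (x - i - ω i)

/-- Variational ground-state energy `E(ω)` of `H_ω = -d²/dx² + V_ω`. -/
def Energy1 (q : ℝ → ℝ) (ω : ℤ → ℝ) : ℝ :=
  sInf {e | ∃ ψ : ℝ → ℝ, ContDiff ℝ (⊤ : ℕ∞) ψ ∧ HasCompactSupport ψ ∧ ψ ≠ 0 ∧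
    e = (∫ x, (deriv ψ x ^ 2 + Vpot1 q ω x * ψ x ^ 2)) / ∫ x, ψ x ^ 2}

/-- `E₀ := inf` over all displacement configurations `ω : ℤ → [-dmax, dmax]`. -/
def GroundEnergy1 (q : ℝ → ℝ) (dmax : ℝ) : ℝ :=
  sInf {e | ∃ ω : ℤ → ℝ, (∀ i, |ω i| ≤ dmax) ∧ e = Energy1 q ω}

/-- Neumann (free) ground-state energy of `-d²/dx² + V` on `(a, b)`:
infimum of Rayleigh quotients over functions smooth on a neighborhood of
`[a, b]` which do not vanish identically. -/
def NeumannGS1 (V : ℝ → ℝ) (a b : ℝ) : ℝ :=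
  sInf {e | ∃ ψ : ℝ → ℝ,
    (∃ U, IsOpen U ∧ Set.Icc a b ⊆ U ∧ ContDiffOn ℝ (⊤ : ℕ∞) ψ U) ∧
    (∃ x ∈ Set.Ioo a b, ψ x ≠ 0) ∧
    e = (∫ x in Set.Ioo a b, (deriv ψ x ^ 2 + V x * ψ x ^ 2)) /
        ∫ x in Set.Ioo a b, ψ x ^ 2}

/-- `E₀(a)`: lowest Neumann eigenvalue of `-d²/dx² + q(· - a)` on `(-1/2, 1/2)`. -/
def E0fun1 (q : ℝ → ℝ) (a : ℝ) : ℝ :=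
  NeumannGS1 (fun x => q (x - a)) (-(1 / 2)) (1 / 2)

/-- Alternative (i) in dimension one: `E₀(·)` is strictly maximized at `0`,
takes the same value at `± dmax`, and is strictly smaller at `± dmax` than at
any interior point. -/
def AltI1 (q : ℝ → ℝ) (dmax : ℝ) : Prop :=
  (∀ a : ℝ, |a| ≤ dmax → a ≠ 0 → E0fun1 q a < E0fun1 q 0) ∧
  (E0fun1 q dmax = E0fun1 q (-dmax)) ∧
  (∀ a : ℝ, |a| < dmax → E0fun1 q dmax < E0fun1 q a)

/-- Finite-volume potential for `ω ∈ [-dmax, dmax]^L`: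
`∑_{i=1}^L q(x - i - ω_i)`. -/
def VL (q : ℝ → ℝ) (L : ℕ) (ω : Fin L → ℝ) (x : ℝ) : ℝ :=
  ∑ i : Fin L, q (x - ((i : ℕ) + 1 : ℝ) - ω i)

/-- Dirichlet ground-state energy of `-d²/dx² + V` on `(a, b)`:
infimum of Rayleigh quotients over nonzero `ψ ∈ C_c^∞((a, b))`. -/
def DirichletGS1 (V : ℝ → ℝ) (a b : ℝ) : ℝ :=
  sInf {e | ∃ ψ : ℝ → ℝ, ContDiff ℝ (⊤ : ℕ∞) ψ ∧ HasCompactSupport ψ ∧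
    tsupport ψ ⊆ Set.Ioo a b ∧ ψ ≠ 0 ∧
    e = (∫ x in Set.Ioo a b, (deriv ψ x ^ 2 + V x * ψ x ^ 2)) /
        ∫ x in Set.Ioo a b, ψ x ^ 2}

/-- `λ_L^D(ω)`: Dirichlet ground-state energy on `(1/2, L + 1/2)`. -/
def lamD (q : ℝ → ℝ) (L : ℕ) (ω : Fin L → ℝ) : ℝ :=
  DirichletGS1 (VL q L ω) (1 / 2) ((L : ℝ) + 1 / 2)

/-- The symmetric Bernoulli configuration attached to a sign pattern
`b ∈ {true, false}^L`: `ω_i = dmax` if `b i`, else `ω_i = -dmax`. -/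
def bernoulliConfig (dmax : ℝ) {L : ℕ} (b : Fin L → Bool) : Fin L → ℝ :=
  fun i => if b i then dmax else -dmax

/-! ### Quadratic forms on intervals -/

/-- The quadratic form of `-d²/dx² + V` on the interval `(a, b)`. -/
def QForm (V f : ℝ → ℝ) (a b : ℝ) : ℝ := ∫ x in a..b, (deriv f x ^ 2 + V x * f x ^ 2)

/-- The squared `L²` norm on the interval `(a, b)`. -/
def sqNorm (f : ℝ → ℝ) (a b : ℝ) : ℝ := ∫ x in a..b, f x ^ 2

lemma integral_Ioo_eq_interval {a b : ℝ} (hab : a ≤ b) (f : ℝ → ℝ) :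
    ∫ x in Ioo a b, f x = ∫ x in a..b, f x := by
  rw [intervalIntegral.integral_of_le hab, integral_Ioc_eq_integral_Ioo]

lemma intervalIntegrable_of_bdd {V : ℝ → ℝ} (hV : Measurable V) {M : ℝ}
    (hM : ∀ x, |V x| ≤ M) (a b : ℝ) : IntervalIntegrable V volume a b := by
  refine (intervalIntegrable_const (c := M)).mono_fun hV.aestronglyMeasurable ?_
  exact Filter.Eventually.of_forall fun x => by
    simpa using (hM x).trans (le_abs_self M)

lemma sqNorm_integrable {f : ℝ → ℝ} {a b : ℝ} (hf : ContinuousOn f (uIcc a b)) :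
    IntervalIntegrable (fun x => f x ^ 2) volume a b :=
  (hf.pow 2).intervalIntegrable

lemma QForm_integrable {V f : ℝ → ℝ} (hV : Measurable V) {M : ℝ}
    (hM : ∀ x, |V x| ≤ M) {a b : ℝ} (hf : ContinuousOn f (uIcc a b))
    (hf' : ContinuousOn (deriv f) (uIcc a b)) :
    IntervalIntegrable (fun x => deriv f x ^ 2 + V x * f x ^ 2) volume a b :=
  (hf'.pow 2).intervalIntegrable.add
    ((intervalIntegrable_of_bdd hV hM a b).mul_continuousOn (hf.pow 2))

lemma smooth_deriv_continuous {f : ℝ → ℝ} (hf : ContDiff ℝ (⊤ : ℕ∞) f) :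
    Continuous (deriv f) :=
  (contDiff_infty_iff_deriv.1 hf).2.continuous

lemma smooth_differentiable {f : ℝ → ℝ} (hf : ContDiff ℝ (⊤ : ℕ∞) f) :
    Differentiable ℝ f :=
  (contDiff_infty_iff_deriv.1 hf).1

lemma QForm_ge {V f : ℝ → ℝ} (hV : Measurable V) {M : ℝ}
    (hM : ∀ x, |V x| ≤ M) {a b : ℝ} (hab : a ≤ b) (hf : ContinuousOn f (uIcc a b))
    (hf' : ContinuousOn (deriv f) (uIcc a b)) :
    -M * sqNorm f a b ≤ QForm V f a b := by
  unfold sqNorm QForm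
  rw [← intervalIntegral.integral_const_mul]
  refine intervalIntegral.integral_mono_on hab ((sqNorm_integrable hf).const_mul _)
    (QForm_integrable hV hM hf hf') fun x _ => ?_
  have := (abs_le.1 (hM x)).1
  nlinarith [sq_nonneg (f x), sq_nonneg (deriv f x)]

lemma sqNorm_nonneg (f : ℝ → ℝ) {a b : ℝ} (hab : a ≤ b) : 0 ≤ sqNorm f a b :=
  intervalIntegral.integral_nonneg hab fun _ _ => sq_nonneg _

lemma quot_ge {V f : ℝ → ℝ} (hV : Measurable V) {M : ℝ}
    (hM : ∀ x, |V x| ≤ M) {a b : ℝ} (hab : a ≤ b) (hf : ContinuousOn f (uIcc a b))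
    (hf' : ContinuousOn (deriv f) (uIcc a b)) :
    -M ≤ QForm V f a b / sqNorm f a b := by
  rcases (sqNorm_nonneg f hab).eq_or_lt with h | h
  · rw [← h, div_zero]
    linarith [(abs_nonneg _).trans (hM 0)]
  · rw [le_div_iff₀ h]
    exact QForm_ge hV hM hab hf hf'

lemma continuousOn_of_nhd {ψ : ℝ → ℝ} {a b : ℝ} (hab : a ≤ b)
    (h : ∃ U, IsOpen U ∧ Set.Icc a b ⊆ U ∧ ContDiffOn ℝ (⊤ : ℕ∞) ψ U) :
    ContinuousOn ψ (uIcc a b) ∧ ContinuousOn (deriv ψ) (uIcc a b) := by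
  obtain ⟨U, hU, hs, hc⟩ := h
  rw [uIcc_of_le hab]
  refine ⟨hc.continuousOn.mono hs, ContinuousOn.mono ?_ hs⟩
  exact hc.continuousOn_deriv_of_isOpen hU (by simp)

lemma neumann_bddBelow {V : ℝ → ℝ} (hV : Measurable V) {M : ℝ}
    (hM : ∀ x, |V x| ≤ M) {a b : ℝ} (hab : a ≤ b) :
    BddBelow {e | ∃ ψ : ℝ → ℝ,
      (∃ U, IsOpen U ∧ Set.Icc a b ⊆ U ∧ ContDiffOn ℝ (⊤ : ℕ∞) ψ U) ∧
      (∃ x ∈ Set.Ioo a b, ψ x ≠ 0) ∧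
      e = (∫ x in Set.Ioo a b, (deriv ψ x ^ 2 + V x * ψ x ^ 2)) /
        ∫ x in Set.Ioo a b, ψ x ^ 2} := by
  refine ⟨-M, ?_⟩
  rintro e ⟨ψ, hU, -, rfl⟩
  rw [integral_Ioo_eq_interval hab, integral_Ioo_eq_interval hab]
  obtain ⟨h1, h2⟩ := continuousOn_of_nhd hab hU
  exact quot_ge hV hM hab h1 h2

lemma sqNorm_pos {f : ℝ → ℝ} {a b : ℝ} (hab : a < b) (hf : ContinuousOn f (uIcc a b))
    (h : ∃ x ∈ Ioo a b, f x ≠ 0) : 0 < sqNorm f a b := by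
  obtain ⟨x, hx, hne⟩ := h
  rw [uIcc_of_le hab.le] at hf
  exact intervalIntegral.integral_pos hab (hf.pow 2) (fun _ _ => sq_nonneg _)
    ⟨x, Ioo_subset_Icc_self hx, by positivity⟩

/-- The variational principle for the Neumann energy, in a form that needs no nonvanishing. -/
lemma neumann_mul_le {V f : ℝ → ℝ} (hV : Measurable V) {M : ℝ}
    (hM : ∀ x, |V x| ≤ M) {a b : ℝ} (hab : a < b) (hf : ContDiff ℝ (⊤ : ℕ∞) f) :
    NeumannGS1 V a b * sqNorm f a b ≤ QForm V f a b := by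
  by_cases h : ∃ x ∈ Ioo a b, f x ≠ 0
  · have hp := sqNorm_pos hab hf.continuous.continuousOn h
    rw [← le_div_iff₀ hp]
    refine csInf_le (neumann_bddBelow hV hM hab.le)
      ⟨f, ⟨univ, isOpen_univ, subset_univ _, hf.contDiffOn⟩, h, ?_⟩
    rw [integral_Ioo_eq_interval hab.le, integral_Ioo_eq_interval hab.le]
    rfl
  · push Not at h
    have h1 : sqNorm f a b = 0 := by
      unfold sqNorm
      rw [intervalIntegral.integral_congr_Ioo_of_le (g := fun _ => (0 : ℝ)) hab.le]
      · simp
      · intro x hx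
        simp [h x hx]
    have h2 : QForm V f a b = 0 := by
      unfold QForm
      rw [intervalIntegral.integral_congr_Ioo_of_le (g := fun _ => (0 : ℝ)) hab.le]
      · simp
      · intro x hx
        have : f =ᶠ[nhds x] fun _ => 0 := by
          filter_upwards [isOpen_Ioo.mem_nhds hx] with y hy using h y hy
        simp [h x hx, this.deriv_eq]
    simp [h1, h2]

/-- Translation of a cell. -/
lemma QForm_shift (V f : ℝ → ℝ) (a b c : ℝ) :
    QForm V f (a + c) (b + c) = QForm (fun x => V (x + c)) (fun x => f (x + c)) a b := by
  unfold QForm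
  simp only [deriv_comp_add_const]
  rw [intervalIntegral.integral_comp_add_right (fun x => deriv f x ^ 2 + V x * f x ^ 2)]

lemma sqNorm_shift (f : ℝ → ℝ) (a b c : ℝ) :
    sqNorm f (a + c) (b + c) = sqNorm (fun x => f (x + c)) a b := by
  unfold sqNorm
  rw [intervalIntegral.integral_comp_add_right (fun x => f x ^ 2)]

lemma QForm_congr {V W f g : ℝ → ℝ} {a b : ℝ} (hab : a ≤ b) (hV : EqOn V W (Ioo a b))
    (hf : EqOn f g (Ioo a b)) : QForm V f a b = QForm W g a b := by
  refine intervalIntegral.integral_congr_Ioo_of_le hab fun x hx => ?_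
  have : f =ᶠ[nhds x] g := by
    filter_upwards [isOpen_Ioo.mem_nhds hx] with y hy using hf hy
  simp only [this.deriv_eq, hV hx, hf hx]

lemma sqNorm_congr {f g : ℝ → ℝ} {a b : ℝ} (hab : a ≤ b)
    (hf : EqOn f g (Ioo a b)) : sqNorm f a b = sqNorm g a b :=
  intervalIntegral.integral_congr_Ioo_of_le hab fun x hx => by simp only [hf hx]

lemma QForm_reflect (V f : ℝ → ℝ) (a : ℝ) :
    QForm (fun x => V (-x)) (fun x => f (-x)) (-a) a = QForm V f (-a) a := by
  unfold QForm
  simp only [deriv_comp_neg, neg_sq]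
  rw [intervalIntegral.integral_comp_neg (fun x => deriv f x ^ 2 + V x * f x ^ 2), neg_neg]

lemma sqNorm_reflect (f : ℝ → ℝ) (a : ℝ) :
    sqNorm (fun x => f (-x)) (-a) a = sqNorm f (-a) a := by
  unfold sqNorm
  rw [intervalIntegral.integral_comp_neg (fun x => f x ^ 2), neg_neg]

lemma QForm_smul (V f : ℝ → ℝ) (c a b : ℝ) (hf : Differentiable ℝ f) :
    QForm V (fun x => c * f x) a b = c ^ 2 * QForm V f a b := by
  unfold QForm
  rw [← intervalIntegral.integral_const_mul]
  congr 1
  ext x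
  rw [deriv_const_mul _ (hf x)]
  ring

lemma sqNorm_smul (f : ℝ → ℝ) (c a b : ℝ) :
    sqNorm (fun x => c * f x) a b = c ^ 2 * sqNorm f a b := by
  unfold sqNorm
  rw [← intervalIntegral.integral_const_mul]
  congr 1
  ext x
  ring

/-! ### Bracketing: the cell energies bound the global ground-state energy from below -/

lemma supp_cell {r dmax : ℝ} (hdmax : dmax = 1 / 2 - r) {q : ℝ → ℝ}
    (hq_supp : ∀ x : ℝ, r < |x| → q x = 0) {i j : ℤ} (hij : j ≠ i) {x w : ℝ}
    (hx : x ∈ Ioo (-(1 / 2) : ℝ) (1 / 2)) (hw : |w| ≤ dmax) : q (x + i - j - w) = 0 := by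
  apply hq_supp
  have h1 := abs_le.1 hw
  rcases lt_or_gt_of_ne hij with h | h
  · have : (j : ℝ) + 1 ≤ i := by exact_mod_cast h
    rw [lt_abs]
    left
    linarith [hx.1]
  · have : (i : ℝ) + 1 ≤ j := by exact_mod_cast h
    rw [lt_abs]
    right
    linarith [hx.2]

lemma Vpot1_cell {r dmax : ℝ} (hdmax : dmax = 1 / 2 - r) {q : ℝ → ℝ}
    (hq_supp : ∀ x : ℝ, r < |x| → q x = 0) {ω : ℤ → ℝ} (hω : ∀ i, |ω i| ≤ dmax) (i : ℤ)
    {x : ℝ} (hx : x ∈ Ioo (-(1 / 2) : ℝ) (1 / 2)) :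
    Vpot1 q ω (x + i) = q (x - ω i) := by
  unfold Vpot1
  rw [tsum_eq_single i]
  · congr 1
    ring
  · intro j hj
    exact supp_cell hdmax hq_supp hj hx (hω j)

lemma energy_ge {r dmax : ℝ} (hdmax : dmax = 1 / 2 - r) {q : ℝ → ℝ}
    (hq_meas : Measurable q) {M : ℝ} (hM : ∀ x, |q x| ≤ M)
    (hq_supp : ∀ x : ℝ, r < |x| → q x = 0) {ω : ℤ → ℝ} (hω : ∀ i, |ω i| ≤ dmax) {e : ℝ}
    (he : ∀ a, |a| ≤ dmax → e ≤ E0fun1 q a) : e ≤ Energy1 q ω := by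
  refine le_csInf ?_ ?_
  · obtain ⟨f⟩ : Nonempty (ContDiffBump (0 : ℝ)) := inferInstance
    refine ⟨_, f, f.contDiff, f.hasCompactSupport, ?_, rfl⟩
    intro h
    have := f.one_of_mem_closedBall (x := 0) (by simp [f.rIn_pos.le])
    simp [h] at this
  rintro _ ⟨ψ, hψ, hcs, hne, rfl⟩
  obtain ⟨R, hR⟩ := hcs.isCompact.isBounded.subset_closedBall 0
  obtain ⟨n, hn⟩ := exists_nat_gt R
  have hsupp : ∀ x, ψ x ≠ 0 → x ∈ Ioo (-(n : ℝ)) n := by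
    intro x hx
    have := hR (subset_tsupport ψ hx)
    rw [mem_closedBall_zero_iff, Real.norm_eq_abs] at this
    exact abs_lt.1 (this.trans_lt hn)
  have hsupp' : ∀ x, deriv ψ x ≠ 0 → x ∈ Ioo (-(n : ℝ)) n := by
    intro x hx
    have := hR (support_deriv_subset hx)
    rw [mem_closedBall_zero_iff, Real.norm_eq_abs] at this
    exact abs_lt.1 (this.trans_lt hn)
  -- the left ends of the unit cells centred at the integers `k - n`
  set a : ℕ → ℝ := fun k => -(1 / 2) + (((k : ℤ) - n : ℤ) : ℝ) with ha
  have ha1 : ∀ k, a (k + 1) = 1 / 2 + (((k : ℤ) - n : ℤ) : ℝ) := by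
    intro k
    simp only [ha]
    push_cast
    ring
  have ha0 : a 0 ≤ -n := by
    simp only [ha]
    push_cast
    linarith
  have han : (n : ℝ) ≤ a (2 * n + 1) := by
    rw [ha1]
    push_cast
    linarith
  have e1 : ∫ x, (deriv ψ x ^ 2 + Vpot1 q ω x * ψ x ^ 2) =
      ∑ k ∈ Finset.range (2 * n + 1), QForm (Vpot1 q ω) ψ (a k) (a (k + 1)) := by
    unfold QForm
    rw [intervalIntegral.sum_integral_adjacent_intervals,
      intervalIntegral.integral_eq_integral_of_support_subset]
    · intro x hx
      have : ψ x ≠ 0 ∨ deriv ψ x ≠ 0 := by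
        by_contra! h
        simp [h.1, h.2] at hx
      have := this.elim (hsupp x) (hsupp' x)
      exact ⟨ha0.trans_lt this.1, this.2.le.trans han⟩
    · intro k _
      have hkk : a k ≤ a (k + 1) := by
        rw [ha1]
        simp only [ha]
        linarith
      refine IntervalIntegrable.congr_uIoo (f := fun x => deriv ψ x ^ 2 +
        q (x - (((k : ℤ) - n : ℤ) : ℝ) - ω ((k : ℤ) - n)) * ψ x ^ 2) ?_ ?_
      · exact QForm_integrable (V := fun x => q (x - (((k : ℤ) - n : ℤ) : ℝ) - ω ((k : ℤ) - n)))
          (by fun_prop) (fun x => hM _) hψ.continuous.continuousOn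
          (smooth_deriv_continuous hψ).continuousOn
      · rw [uIoo_of_le hkk, ha1]
        intro x hx
        simp only [ha] at hx
        have := Vpot1_cell hdmax hq_supp hω ((k : ℤ) - n)
          (x := x - (((k : ℤ) - n : ℤ) : ℝ))
          ⟨by linarith [hx.1], by linarith [hx.2]⟩
        simp only [sub_add_cancel] at this
        simp only [this]
  have e2 : ∫ x, ψ x ^ 2 = ∑ k ∈ Finset.range (2 * n + 1), sqNorm ψ (a k) (a (k + 1)) := by
    unfold sqNorm
    rw [intervalIntegral.sum_integral_adjacent_intervals,
      intervalIntegral.integral_eq_integral_of_support_subset]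
    · intro x hx
      have := hsupp x (by simpa using hx)
      exact ⟨ha0.trans_lt this.1, this.2.le.trans han⟩
    · intro k _
      exact sqNorm_integrable hψ.continuous.continuousOn
  have hpos : 0 < ∫ x, ψ x ^ 2 := by
    refine Continuous.integral_pos_of_hasCompactSupport_nonneg_nonzero
      (f := fun x => ψ x ^ 2) (x := (Function.ne_iff.1 hne).choose) (hψ.continuous.pow 2) ?_
      (fun _ => sq_nonneg _) ?_
    · exact hcs.comp_left (g := fun y : ℝ => y ^ 2) (by simp)
    · exact pow_ne_zero _ (Function.ne_iff.1 hne).choose_spec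
  rw [le_div_iff₀ hpos, e1, e2, Finset.mul_sum]
  refine Finset.sum_le_sum fun k _ => ?_
  rw [ha1]
  simp only [ha]
  rw [QForm_shift, sqNorm_shift]
  have hc := QForm_congr (f := fun x => ψ (x + (((k : ℤ) - n : ℤ) : ℝ)))
    (W := fun x => q (x - ω ((k : ℤ) - n))) (by norm_num)
    (fun x hx => Vpot1_cell hdmax hq_supp hω _ hx) (fun _ _ => rfl)
  rw [hc]
  refine le_trans (mul_le_mul_of_nonneg_right (he _ (hω ((k : ℤ) - n)))
    (sqNorm_nonneg _ (by norm_num))) ?_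
  exact neumann_mul_le (by fun_prop) (fun _ => hM _) (by norm_num)
    (hψ.comp (contDiff_id.add contDiff_const))

lemma groundEnergy_ge {r dmax : ℝ} (hr : r < 1 / 2) (hdmax : dmax = 1 / 2 - r) {q : ℝ → ℝ}
    (hq_meas : Measurable q) {M : ℝ} (hM : ∀ x, |q x| ≤ M)
    (hq_supp : ∀ x : ℝ, r < |x| → q x = 0) {e : ℝ}
    (he : ∀ a, |a| ≤ dmax → e ≤ E0fun1 q a) : e ≤ GroundEnergy1 q dmax := by
  refine le_csInf ⟨_, fun _ => 0, fun _ => ?_, rfl⟩ ?_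
  · rw [abs_zero]
    linarith
  · rintro _ ⟨ω, hω, rfl⟩
    exact energy_ge hdmax hq_meas hM hq_supp hω he

/-! ### Near-minimizers that are constant near both ends of the cell -/

/-- Smooth functions that are constant on each side of the unit cell `(-1/2, 1/2)`. Translates
of such functions glue smoothly along adjacent cells as soon as the boundary values match. -/
structure Plateau (f : ℝ → ℝ) : Prop where
  smooth : ContDiff ℝ (⊤ : ℕ∞) f
  left : ∀ x ≤ -(1 / 2 : ℝ), f x = f (-(1 / 2))
  right : ∀ x ≥ (1 / 2 : ℝ), f x = f (1 / 2)

lemma Plateau.reflect {f : ℝ → ℝ} (hf : Plateau f) : Plateau (fun x => f (-x)) where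
  smooth := hf.smooth.comp contDiff_neg
  left x hx := by
    rw [neg_neg]
    exact hf.right _ (by linarith)
  right x hx := hf.left _ (by linarith)

lemma Plateau.smul {f : ℝ → ℝ} (hf : Plateau f) (c : ℝ) : Plateau (fun x => c * f x) where
  smooth := contDiff_const.mul hf.smooth
  left x hx := by rw [hf.left x hx]
  right x hx := by rw [hf.right x hx]

lemma Plateau.add {f g : ℝ → ℝ} (hf : Plateau f) (hg : Plateau g) :
    Plateau (fun x => f x + g x) where
  smooth := hf.smooth.add hg.smooth
  left x hx := by rw [hf.left x hx, hg.left x hx]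
  right x hx := by rw [hf.right x hx, hg.right x hx]

/-- Multiplying `ψ'` by a cutoff and integrating turns `ψ` into a plateau function without
increasing `|ψ'|` in the cell; a cutoff acting only near the ends changes `ψ` by at most `κ`. -/
lemma plateau_near {ψ : ℝ → ℝ}
    (h : ∃ U, IsOpen U ∧ Set.Icc (-(1 / 2) : ℝ) (1 / 2) ⊆ U ∧ ContDiffOn ℝ (⊤ : ℕ∞) ψ U)
    {κ : ℝ} (hκ : 0 < κ) :
    ∃ φ : ℝ → ℝ, Plateau φ ∧ ∀ x ∈ Icc (-(1 / 2) : ℝ) (1 / 2),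
      |φ x - ψ x| ≤ κ ∧ |deriv φ x| ≤ |deriv ψ x| := by
  have hab : -(1 / 2 : ℝ) ≤ 1 / 2 := by norm_num
  obtain ⟨-, hc⟩ := continuousOn_of_nhd hab h
  rw [uIcc_of_le hab] at hc
  obtain ⟨D, hD⟩ := isCompact_Icc.exists_bound_of_continuousOn hc
  obtain ⟨U, hU, hsU, hψ⟩ := h
  have hD0 : 0 ≤ D := (norm_nonneg _).trans (hD 0 (by constructor <;> norm_num))
  obtain ⟨t, ht0, ht1, htD⟩ : ∃ t : ℝ, 0 < t ∧ t < 1 / 4 ∧ D * (2 * t) ≤ κ := by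
    refine ⟨min (1 / 8) (κ / (2 * (D + 1))), by positivity,
      (min_le_left _ _).trans_lt (by norm_num), ?_⟩
    have : min (1 / 8) (κ / (2 * (D + 1))) ≤ κ / (2 * (D + 1)) := min_le_right _ _
    calc D * (2 * min (1 / 8) (κ / (2 * (D + 1)))) ≤ D * (2 * (κ / (2 * (D + 1)))) := by gcongr
      _ = κ * (D / (D + 1)) := by field_simp
      _ ≤ κ * 1 := by
        gcongr
        rw [div_le_one (by linarith)]
        linarith
      _ = κ := mul_one _
  let B : ContDiffBump (0 : ℝ) := ⟨1 / 2 - 2 * t, 1 / 2 - t, by linarith, by linarith⟩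
  have hB1 : ∀ x, |x| ≤ 1 / 2 - 2 * t → B x = 1 := fun x hx =>
    B.one_of_mem_closedBall (mem_closedBall_zero_iff.2 hx)
  have hB0 : ∀ x, 1 / 2 - t ≤ |x| → B x = 0 := fun x hx =>
    B.zero_of_le_dist ((Real.dist_0_eq_abs x).symm ▸ hx)
  set g : ℝ → ℝ := fun x => B x * deriv ψ x with hg
  have hgs : ContDiff ℝ (⊤ : ℕ∞) g := by
    rw [contDiff_iff_contDiffAt]
    intro x
    by_cases hx : |x| ≤ 1 / 2
    · have hxU : x ∈ U := hsU (abs_le.1 hx)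
      refine B.contDiff.contDiffAt.mul ?_
      have := (hψ.deriv_of_isOpen (m := (⊤ : ℕ∞)) hU (by simp)).contDiffAt (hU.mem_nhds hxU)
      exact this
    · push Not at hx
      have : g =ᶠ[nhds x] fun _ => 0 := by
        filter_upwards [(isOpen_lt continuous_const continuous_abs).mem_nhds hx] with y hy
        simp [hg, hB0 y (by linarith [show 1 / 2 < |y| from hy])]
      exact contDiffAt_const.congr_of_eventuallyEq this
  set φ : ℝ → ℝ := fun x => ψ 0 + ∫ y in (0 : ℝ)..x, g y with hφ
  have hder : ∀ x, HasDerivAt φ (g x) x := fun x =>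
    (intervalIntegral.integral_hasDerivAt_right (hgs.continuous.intervalIntegrable _ _)
      (hgs.continuous.stronglyMeasurableAtFilter _ _) hgs.continuous.continuousAt).const_add _
  have hder' : deriv φ = g := funext fun x => (hder x).deriv
  have hψd : ∀ x ∈ Icc (-(1 / 2) : ℝ) (1 / 2), HasDerivAt ψ (deriv ψ x) x := fun x hx =>
    ((hψ.contDiffAt (hU.mem_nhds (hsU hx))).differentiableAt (by simp)).hasDerivAt
  have hcon : ∀ s : Set ℝ, Convex ℝ s → (∀ y ∈ s, 1 / 2 - t ≤ |y|) →
      ∀ x ∈ s, ∀ y ∈ s, φ y = φ x := by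
    intro s hs h0 x hx y hy
    have := Convex.norm_image_sub_le_of_norm_hasDerivWithin_le (C := 0)
      (fun z _ => (hder z).hasDerivWithinAt) (fun z hz => by simp [hg, hB0 z (h0 z hz)]) hs hx hy
    simpa [sub_eq_zero] using this
  refine ⟨φ, ⟨contDiff_infty_iff_deriv.2 ⟨fun x => (hder x).differentiableAt, hder' ▸ hgs⟩,
    ?_, ?_⟩, ?_⟩
  · intro x hx
    refine hcon (Iic (-(1 / 2))) (convex_Iic _) (fun y hy => ?_) _ self_mem_Iic _ hx
    rw [mem_Iic] at hy
    linarith [neg_le_abs y]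
  · intro x hx
    refine hcon (Ici (1 / 2)) (convex_Ici _) (fun y hy => ?_) _ self_mem_Ici _ hx
    rw [mem_Ici] at hy
    linarith [le_abs_self y]
  · have hw : ∀ x ∈ Icc (-(1 / 2) : ℝ) (1 / 2),
        HasDerivAt (fun x => φ x - ψ x) ((B x - 1) * deriv ψ x) x := by
      intro x hx
      convert! (hder x).sub (hψd x hx) using 1
      simp only [hg]
      ring
    -- the difference vanishes on the core of the cell
    have hcore : ∀ x ∈ Icc (-(1 / 2 - 2 * t)) (1 / 2 - 2 * t), φ x - ψ x = 0 := by
      intro x hx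
      have := Convex.norm_image_sub_le_of_norm_hasDerivWithin_le (C := 0)
        (s := Icc (-(1 / 2 - 2 * t)) (1 / 2 - 2 * t)) (x := 0) (y := x)
        (fun z hz => (hw z ⟨by linarith [hz.1], by linarith [hz.2]⟩).hasDerivWithinAt)
        (fun z hz => by simp [hB1 z (abs_le.2 hz)]) (convex_Icc _ _)
        ⟨by linarith, by linarith⟩ hx
      simpa [hφ] using this
    have hbd : ∀ x ∈ Icc (-(1 / 2) : ℝ) (1 / 2), ‖(B x - 1) * deriv ψ x‖ ≤ D := by
      intro x hx
      rw [norm_mul]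
      have h1 : ‖B x - 1‖ ≤ 1 := by
        rw [Real.norm_eq_abs, abs_le]
        constructor <;> linarith [B.nonneg (x := x), B.le_one (x := x)]
      calc _ ≤ 1 * D := mul_le_mul h1 (hD x hx) (norm_nonneg _) zero_le_one
        _ = D := one_mul _
    have hlip : ∀ x ∈ Icc (-(1 / 2) : ℝ) (1 / 2), ∀ y ∈ Icc (-(1 / 2) : ℝ) (1 / 2),
        |(φ y - ψ y) - (φ x - ψ x)| ≤ D * |y - x| := fun x hx y hy =>
      Convex.norm_image_sub_le_of_norm_hasDerivWithin_le
        (fun z hz => (hw z hz).hasDerivWithinAt) hbd (convex_Icc _ _) hx hy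
    intro x hx
    refine ⟨?_, ?_⟩
    · rcases le_total x (-(1 / 2 - 2 * t)) with h1 | h1
      · have h2 := hlip (-(1 / 2 - 2 * t)) ⟨by linarith, by linarith⟩ x hx
        rw [hcore (-(1 / 2 - 2 * t)) ⟨by linarith, by linarith⟩, sub_zero] at h2
        refine h2.trans (le_trans ?_ htD)
        gcongr
        rw [abs_le]
        constructor <;> linarith [hx.1]
      rcases le_total x (1 / 2 - 2 * t) with h3 | h3
      · rw [hcore x ⟨h1, h3⟩, abs_zero]
        exact hκ.le
      · have h2 := hlip (1 / 2 - 2 * t) ⟨by linarith, by linarith⟩ x hx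
        rw [hcore (1 / 2 - 2 * t) ⟨by linarith, by linarith⟩, sub_zero] at h2
        refine h2.trans (le_trans ?_ htD)
        gcongr
        rw [abs_le]
        constructor <;> linarith [hx.2]
    · rw [hder']
      simp only [hg, abs_mul, abs_of_nonneg B.nonneg]
      exact mul_le_of_le_one_left (abs_nonneg _) B.le_one

/-- Positivity is obtained by passing from `φ` to `√(φ² + κ)`. -/
lemma plateau_pos {ψ : ℝ → ℝ}
    (h : ∃ U, IsOpen U ∧ Set.Icc (-(1 / 2) : ℝ) (1 / 2) ⊆ U ∧ ContDiffOn ℝ (⊤ : ℕ∞) ψ U)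
    {η : ℝ} (hη : 0 < η) :
    ∃ f : ℝ → ℝ, Plateau f ∧ (∀ x, 0 < f x) ∧ ∀ x ∈ Icc (-(1 / 2) : ℝ) (1 / 2),
      |f x ^ 2 - ψ x ^ 2| ≤ η ∧ deriv f x ^ 2 ≤ deriv ψ x ^ 2 := by
  have hab : -(1 / 2 : ℝ) ≤ 1 / 2 := by norm_num
  obtain ⟨hc, -⟩ := continuousOn_of_nhd hab h
  rw [uIcc_of_le hab] at hc
  obtain ⟨D, hD⟩ := isCompact_Icc.exists_bound_of_continuousOn hc
  have hD0 : 0 ≤ D := (norm_nonneg _).trans (hD 0 (by constructor <;> norm_num))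
  obtain ⟨κ, hκ0, hκ1, hκ⟩ : ∃ κ : ℝ, 0 < κ ∧ κ ≤ 1 ∧ κ * (2 * D + 2) ≤ η := by
    refine ⟨min 1 (η / (2 * D + 2)), by positivity, min_le_left _ _, ?_⟩
    rw [← le_div_iff₀ (by positivity)]
    exact min_le_right _ _
  obtain ⟨φ, hφ, hφψ⟩ := plateau_near h hκ0
  have hp : ∀ x, 0 < φ x ^ 2 + κ := fun x => by positivity
  refine ⟨fun x => √(φ x ^ 2 + κ), ⟨?_, fun x hx => ?_, fun x hx => ?_⟩,
    fun x => Real.sqrt_pos.2 (hp x), fun x hx => ⟨?_, ?_⟩⟩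
  · exact ((hφ.smooth.pow 2).add contDiff_const).sqrt fun x => (hp x).ne'
  · simp only [hφ.left x hx]
  · simp only [hφ.right x hx]
  · have h1 := (hφψ x hx).1
    have h2 : |ψ x| ≤ D := hD x hx
    rw [Real.sq_sqrt (hp x).le]
    rw [show φ x ^ 2 + κ - ψ x ^ 2 = (φ x - ψ x) * ((φ x - ψ x) + 2 * ψ x) + κ by ring]
    calc _ ≤ |φ x - ψ x| * (|φ x - ψ x| + 2 * |ψ x|) + κ := by
          refine (abs_add_le _ _).trans ?_
          rw [abs_mul, abs_of_pos hκ0]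
          gcongr
          refine (abs_add_le _ _).trans ?_
          rw [abs_mul, abs_two]
      _ ≤ κ * (1 + 2 * D) + κ := by
          gcongr
          exact h1.trans hκ1
      _ = κ * (2 * D + 2) := by ring
      _ ≤ η := hκ
  · have hd := (((smooth_differentiable hφ.smooth x).hasDerivAt.pow 2).add_const κ).sqrt (hp x).ne'
    rw [show deriv (fun x => √(φ x ^ 2 + κ)) x = _ from hd.deriv]
    have hs := Real.sq_sqrt (hp x).le
    have h3 := sq_le_sq.2 (hφψ x hx).2
    refine le_trans ?_ h3
    simp only [Nat.cast_ofNat, Nat.add_one_sub_one, pow_one]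
    rw [div_pow, div_le_iff₀ (by have := hp x; positivity), mul_pow _ (√_), Pi.pow_apply, hs]
    nlinarith [mul_nonneg (sq_nonneg (deriv φ x)) hκ0.le]

/-- The infimum defining the Neumann energy of the cell is approached, up to any `δ > 0`, by
positive normalized plateau functions. -/
lemma plateau_minimizer {V : ℝ → ℝ} (hV : Measurable V) {M : ℝ} (hM : ∀ x, |V x| ≤ M)
    {δ : ℝ} (hδ : 0 < δ) :
    ∃ f : ℝ → ℝ, Plateau f ∧ (∀ x, 0 < f x) ∧ sqNorm f (-(1 / 2)) (1 / 2) = 1 ∧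
      QForm V f (-(1 / 2)) (1 / 2) ≤ NeumannGS1 V (-(1 / 2)) (1 / 2) + δ := by
  have hab : -(1 / 2 : ℝ) < 1 / 2 := by norm_num
  have hM0 : 0 ≤ M := (abs_nonneg _).trans (hM 0)
  obtain ⟨_, ⟨ψ, hU, hne, rfl⟩, hlt⟩ := exists_lt_of_csInf_lt
    (s := {e | ∃ ψ : ℝ → ℝ,
      (∃ U, IsOpen U ∧ Set.Icc (-(1 / 2) : ℝ) (1 / 2) ⊆ U ∧ ContDiffOn ℝ (⊤ : ℕ∞) ψ U) ∧
      (∃ x ∈ Set.Ioo (-(1 / 2) : ℝ) (1 / 2), ψ x ≠ 0) ∧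
      e = (∫ x in Set.Ioo (-(1 / 2) : ℝ) (1 / 2), (deriv ψ x ^ 2 + V x * ψ x ^ 2)) /
        ∫ x in Set.Ioo (-(1 / 2) : ℝ) (1 / 2), ψ x ^ 2})
    (b := NeumannGS1 V (-(1 / 2)) (1 / 2) + δ)
    ⟨_, fun _ => 1, ⟨univ, isOpen_univ, subset_univ _, contDiffOn_const⟩,
      ⟨0, by norm_num, one_ne_zero⟩, rfl⟩ (lt_add_of_pos_right _ hδ)
  rw [integral_Ioo_eq_interval hab.le, integral_Ioo_eq_interval hab.le] at hlt
  obtain ⟨hc, hc'⟩ := continuousOn_of_nhd hab.le hU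
  set e := NeumannGS1 V (-(1 / 2)) (1 / 2) with he
  have hpos : 0 < sqNorm ψ (-(1 / 2)) (1 / 2) := sqNorm_pos hab hc hne
  change QForm V ψ (-(1 / 2)) (1 / 2) / sqNorm ψ (-(1 / 2)) (1 / 2) < e + δ at hlt
  rw [div_lt_iff₀ hpos] at hlt
  set gap := (e + δ) * sqNorm ψ (-(1 / 2)) (1 / 2) - QForm V ψ (-(1 / 2)) (1 / 2) with hgap
  have hgap0 : 0 < gap := by linarith
  set K := M + |e + δ| + 1 with hK
  have hK0 : 0 < K := by positivity
  obtain ⟨f, hf, hfpos, hfψ⟩ := plateau_pos hU (η := gap / K) (by positivity)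
  have hfc := hf.smooth.continuous.continuousOn (s := uIcc (-(1 / 2 : ℝ)) (1 / 2))
  have hfc' := (smooth_deriv_continuous hf.smooth).continuousOn
    (s := uIcc (-(1 / 2 : ℝ)) (1 / 2))
  have hNf : 0 < sqNorm f (-(1 / 2)) (1 / 2) :=
    sqNorm_pos hab hfc ⟨0, by norm_num, (hfpos 0).ne'⟩
  have hone : ∀ c : ℝ, ∫ _ in (-(1 / 2) : ℝ)..(1 / 2), c = c := fun c => by
    simp only [intervalIntegral.integral_const, smul_eq_mul]
    ring
  -- comparison of the two shifted forms at the energy `e + δ`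
  have hcmp : QForm V f (-(1 / 2)) (1 / 2) - (e + δ) * sqNorm f (-(1 / 2)) (1 / 2) ≤ 0 := by
    have h1 : QForm V f (-(1 / 2)) (1 / 2) - (e + δ) * sqNorm f (-(1 / 2)) (1 / 2) ≤
        (QForm V ψ (-(1 / 2)) (1 / 2) - (e + δ) * sqNorm ψ (-(1 / 2)) (1 / 2)) + gap := by
      conv_rhs => rw [← hone gap]
      unfold QForm sqNorm
      rw [← intervalIntegral.integral_const_mul, ← intervalIntegral.integral_const_mul,
        ← intervalIntegral.integral_sub (QForm_integrable hV hM hfc hfc')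
          ((sqNorm_integrable hfc).const_mul _),
        ← intervalIntegral.integral_sub (QForm_integrable hV hM hc hc')
          ((sqNorm_integrable hc).const_mul _),
        ← intervalIntegral.integral_add ((QForm_integrable hV hM hc hc').sub
          ((sqNorm_integrable hc).const_mul _)) intervalIntegrable_const]
      refine intervalIntegral.integral_mono_on hab.le
        ((QForm_integrable hV hM hfc hfc').sub ((sqNorm_integrable hfc).const_mul _))
        (((QForm_integrable hV hM hc hc').sub
          ((sqNorm_integrable hc).const_mul _)).add intervalIntegrable_const) fun x hx => ?_
      obtain ⟨h1, h2⟩ := hfψ x hx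
      have h3 : |(V x - (e + δ)) * (f x ^ 2 - ψ x ^ 2)| ≤ K * (gap / K) := by
        rw [abs_mul]
        refine mul_le_mul ?_ h1 (abs_nonneg _) hK0.le
        refine (abs_sub _ _).trans ?_
        linarith [hM x]
      rw [mul_div_cancel₀ _ hK0.ne'] at h3
      have := (abs_le.1 h3).2
      linarith
    linarith
  refine ⟨fun x => (√(sqNorm f (-(1 / 2)) (1 / 2)))⁻¹ * f x, hf.smul _,
    fun x => mul_pos (by positivity) (hfpos x), ?_, ?_⟩
  · rw [sqNorm_smul, inv_pow, Real.sq_sqrt hNf.le, inv_mul_cancel₀ hNf.ne']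
  · rw [QForm_smul _ _ _ _ _ (smooth_differentiable hf.smooth), inv_pow, Real.sq_sqrt hNf.le,
      inv_mul_le_iff₀ hNf]
    linarith

/-! ### Near-minimizers have a uniform jump between the two ends of the cell -/

/-- A smooth transition from `0` (left of `-1/4`) to `1` (right of `1/4`). -/
def tau (x : ℝ) : ℝ := Real.smoothTransition (2 * x + 1 / 2)

lemma tau_left {x : ℝ} (hx : x ≤ -(1 / 4)) : tau x = 0 :=
  Real.smoothTransition.zero_of_nonpos (by linarith)

lemma tau_right {x : ℝ} (hx : 1 / 4 ≤ x) : tau x = 1 :=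
  Real.smoothTransition.one_of_one_le (by linarith)

lemma tau_plateau : Plateau tau where
  smooth := Real.smoothTransition.contDiff.comp
    ((contDiff_const.mul contDiff_id).add contDiff_const)
  left x hx := by rw [tau_left (by linarith), tau_left (by norm_num)]
  right x hx := by rw [tau_right (by linarith), tau_right (by norm_num)]

lemma QForm_int {V f : ℝ → ℝ} (hV : Measurable V) {M : ℝ}
    (hM : ∀ x, |V x| ≤ M) (hf : ContDiff ℝ (⊤ : ℕ∞) f) (a b : ℝ) :
    IntervalIntegrable (fun x => deriv f x ^ 2 + V x * f x ^ 2) volume a b :=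
  QForm_integrable hV hM hf.continuous.continuousOn (smooth_deriv_continuous hf).continuousOn

lemma sqNorm_int {f : ℝ → ℝ} (hf : ContDiff ℝ (⊤ : ℕ∞) f) (a b : ℝ) :
    IntervalIntegrable (fun x => f x ^ 2) volume a b :=
  sqNorm_integrable hf.continuous.continuousOn

lemma QForm_sub_const {V f : ℝ → ℝ} (hV : Measurable V) {M : ℝ}
    (hM : ∀ x, |V x| ≤ M) (hf : ContDiff ℝ (⊤ : ℕ∞) f) (a b c : ℝ) :
    QForm (fun x => V x - c) f a b = QForm V f a b - c * sqNorm f a b := by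
  unfold QForm sqNorm
  rw [← intervalIntegral.integral_const_mul, ← intervalIntegral.integral_sub
    (QForm_int hV hM hf a b) ((sqNorm_int hf a b).const_mul c)]
  congr 1
  ext x
  ring

lemma QForm_const_le {V f : ℝ → ℝ} (hV : Measurable V) {M : ℝ}
    (hM : ∀ x, |V x| ≤ M) (hf : ContDiff ℝ (⊤ : ℕ∞) f) {a b : ℝ} (hab : a ≤ b) (m : ℝ) :
    QForm (fun _ => m) f a b ≤ QForm V f a b + (m + M) * sqNorm f a b := by
  unfold QForm sqNorm
  rw [← intervalIntegral.integral_const_mul, ← intervalIntegral.integral_add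
    (QForm_int hV hM hf a b) ((sqNorm_int hf a b).const_mul _)]
  refine intervalIntegral.integral_mono_on hab
    (QForm_int measurable_const (M := |m|) (fun _ => le_rfl) hf a b)
    ((QForm_int hV hM hf a b).add ((sqNorm_int hf a b).const_mul _)) fun x _ => ?_
  have := (abs_le.1 (hM x)).1
  nlinarith [sq_nonneg (f x)]

lemma QForm_const_nonneg (f : ℝ → ℝ) {a b m : ℝ} (hab : a ≤ b) (hm : 0 ≤ m) :
    0 ≤ QForm (fun _ => m) f a b :=
  intervalIntegral.integral_nonneg hab fun _ _ => by positivity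

lemma QForm_perturb {W f g : ℝ → ℝ} (hW : Measurable W) {m : ℝ}
    (hm : ∀ x, |W x| ≤ m) (hf : ContDiff ℝ (⊤ : ℕ∞) f) (hg : ContDiff ℝ (⊤ : ℕ∞) g)
    {a b : ℝ} (hab : a ≤ b) (s : ℝ) :
    QForm W (fun x => f x + s * g x) a b ≤ QForm W f a b + (|s| * QForm (fun _ => m) f a b +
      (|s| + s ^ 2) * QForm (fun _ => m) g a b) := by
  have hm0 : 0 ≤ m := (abs_nonneg _).trans (hm 0)
  have hi1 := QForm_int hW hm hf a b
  have hi2 := QForm_int measurable_const (M := |m|) (fun _ => le_rfl) hf a b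
  have hi3 := QForm_int measurable_const (M := |m|) (fun _ => le_rfl) hg a b
  unfold QForm
  rw [← intervalIntegral.integral_const_mul, ← intervalIntegral.integral_const_mul,
    ← intervalIntegral.integral_add (hi2.const_mul _) (hi3.const_mul _),
    ← intervalIntegral.integral_add hi1 ((hi2.const_mul _).add (hi3.const_mul _))]
  refine intervalIntegral.integral_mono_on hab
    (QForm_int hW hm (hf.add (contDiff_const.mul hg)) a b)
    (hi1.add ((hi2.const_mul _).add (hi3.const_mul _))) fun x _ => ?_
  have hd : deriv (fun x => f x + s * g x) x = deriv f x + s * deriv g x := by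
    rw [deriv_fun_add (smooth_differentiable hf x)
      ((smooth_differentiable hg x).const_mul s), deriv_const_mul _ (smooth_differentiable hg x)]
  rw [hd]
  have h1 : ∀ u v : ℝ, 2 * s * (u * v) ≤ |s| * (u ^ 2 + v ^ 2) := by
    intro u v
    calc 2 * s * (u * v) ≤ |2 * s * (u * v)| := le_abs_self _
      _ = |s| * (2 * (|u| * |v|)) := by
        rw [abs_mul, abs_mul, abs_mul, abs_two]
        ring
      _ ≤ |s| * (u ^ 2 + v ^ 2) := by
        gcongr
        nlinarith [sq_nonneg (|u| - |v|), sq_abs u, sq_abs v]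
  have h2 : W x * (2 * s * (f x * g x)) ≤ m * (|s| * (f x ^ 2 + g x ^ 2)) := by
    calc W x * (2 * s * (f x * g x)) ≤ |W x| * |2 * s * (f x * g x)| := by
          rw [← abs_mul]
          exact le_abs_self _
      _ ≤ m * (|s| * (f x ^ 2 + g x ^ 2)) := by
          gcongr
          · exact hm x
          · rw [abs_le]
            constructor
            · have := h1 (-f x) (g x)
              nlinarith
            · exact h1 _ _
  have h3 : W x * (s ^ 2 * g x ^ 2) ≤ m * (s ^ 2 * g x ^ 2) := by
    gcongr
    exact (abs_le.1 (hm x)).2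
  have h4 := h1 (deriv f x) (deriv g x)
  nlinarith

lemma QForm_split {V f : ℝ → ℝ} (hV : Measurable V) {M : ℝ}
    (hM : ∀ x, |V x| ≤ M) (hf : ContDiff ℝ (⊤ : ℕ∞) f) (a b c : ℝ) :
    QForm V f a c = QForm V f a b + QForm V f b c :=
  (intervalIntegral.integral_add_adjacent_intervals (QForm_int hV hM hf a b)
    (QForm_int hV hM hf b c)).symm

lemma sqNorm_split {f : ℝ → ℝ} (hf : ContDiff ℝ (⊤ : ℕ∞) f) (a b c : ℝ) :
    sqNorm f a c = sqNorm f a b + sqNorm f b c :=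
  (intervalIntegral.integral_add_adjacent_intervals (sqNorm_int hf a b)
    (sqNorm_int hf b c)).symm

/-- A plateau function with equal boundary values is periodic; translating it by `d` moves the
single-site potential from `d` to the centre of the cell without changing its energy. -/
lemma periodic_energy {r d : ℝ} (hr0 : 0 < r) (hr : r < 1 / 2)
    (hd : d = 1 / 2 - r) {q : ℝ → ℝ} (hq_meas : Measurable q) {M : ℝ} (hM : ∀ x, |q x| ≤ M)
    (hq_supp : ∀ x : ℝ, r < |x| → q x = 0) {f : ℝ → ℝ} (hf : Plateau f)
    (heq : f (-(1 / 2)) = f (1 / 2)) :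
    E0fun1 q 0 * sqNorm f (-(1 / 2)) (1 / 2) ≤
      QForm (fun x => q (x - d)) f (-(1 / 2)) (1 / 2) := by
  set ψ : ℝ → ℝ := fun x => f (x + d) + f (x + (d - 1)) - f (1 / 2) with hψ
  have hψs : ContDiff ℝ (⊤ : ℕ∞) ψ :=
    ((hf.smooth.comp (contDiff_id.add contDiff_const)).add
      (hf.smooth.comp (contDiff_id.add contDiff_const))).sub contDiff_const
  have hL : EqOn ψ (fun x => f (x + d)) (Ioo (-(1 / 2)) r) := by
    intro x hx
    simp only [hψ]
    rw [hf.left (x + (d - 1)) (by linarith [hx.2]), heq]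
    ring
  have hR : EqOn ψ (fun x => f (x + (d - 1))) (Ioo r (1 / 2)) := by
    intro x hx
    simp only [hψ]
    rw [hf.right (x + d) (by linarith [hx.1])]
    ring
  have h1 := neumann_mul_le (V := fun x => q (x - 0)) (by fun_prop) (fun x => hM _)
    (show (-(1 / 2) : ℝ) < 1 / 2 by norm_num) hψs
  have e1 : sqNorm ψ (-(1 / 2)) (1 / 2) = sqNorm f (-(1 / 2)) (1 / 2) := by
    rw [sqNorm_split hψs _ r, sqNorm_congr (by linarith) hL, sqNorm_congr (by linarith) hR,
      ← sqNorm_shift, ← sqNorm_shift, sqNorm_split hf.smooth (-(1 / 2)) (1 / 2 + (d - 1)),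
      add_comm]
    congr 2 <;> linarith
  have e2 : QForm (fun x => q (x - 0)) ψ (-(1 / 2)) (1 / 2) =
      QForm (fun x => q (x - d)) f (-(1 / 2)) (1 / 2) := by
    rw [QForm_split (V := fun x => q (x - 0)) (by fun_prop) (fun x => hM _) hψs _ r,
      QForm_congr (W := fun x => (fun y => q (y - d)) (x + d)) (by linarith)
        (fun x _ => by simp) hL,
      QForm_congr (W := fun x => (fun y => q (y - d)) (x + (d - 1))) (by linarith) ?_ hR,
      ← QForm_shift (fun y => q (y - d)), ← QForm_shift (fun y => q (y - d)),
      QForm_split (V := fun x => q (x - d)) (by fun_prop) (fun x => hM _) hf.smooth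
        (-(1 / 2)) (1 / 2 + (d - 1)), add_comm]
    · congr 2 <;> linarith
    · intro x hx
      simp only
      rw [hq_supp (x - 0) (by rw [lt_abs]; left; linarith [hx.1]),
        hq_supp (x + (d - 1) - d) (by rw [lt_abs]; right; linarith [hx.2])]
  rw [e1, e2] at h1
  exact h1

lemma plateau_boundary_le {f : ℝ → ℝ} (hf : Plateau f) :
    f (1 / 2) ≤ (QForm (fun _ => 1) f (-(1 / 2)) (1 / 2) +
      QForm (fun _ => 1) tau (-(1 / 2)) (1 / 2)) / 2 := by
  have hs := tau_plateau.smooth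
  have hi1 := QForm_int measurable_const (M := |1|) (fun _ => le_rfl) hf.smooth (-(1 / 2)) (1 / 2)
  have hi2 := QForm_int measurable_const (M := |1|) (fun _ => le_rfl) hs (-(1 / 2)) (1 / 2)
  have hcont : Continuous fun x => deriv tau x * f x + tau x * deriv f x :=
    ((smooth_deriv_continuous hs).mul hf.smooth.continuous).add
      (hs.continuous.mul (smooth_deriv_continuous hf.smooth))
  have h1 : ∫ x in (-(1 / 2) : ℝ)..(1 / 2), (deriv tau x * f x + tau x * deriv f x) =
      tau (1 / 2) * f (1 / 2) - tau (-(1 / 2)) * f (-(1 / 2)) :=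
    intervalIntegral.integral_eq_sub_of_hasDerivAt (f := fun x => tau x * f x)
      (fun x _ => (smooth_differentiable hs x).hasDerivAt.mul
        (smooth_differentiable hf.smooth x).hasDerivAt) (hcont.intervalIntegrable _ _)
  rw [tau_right (by norm_num), tau_left (by norm_num)] at h1
  rw [show f (1 / 2) = 1 * f (1 / 2) - 0 * f (-(1 / 2)) by ring, ← h1]
  unfold QForm
  rw [← intervalIntegral.integral_add hi1 hi2, ← intervalIntegral.integral_div]
  refine intervalIntegral.integral_mono_on (by norm_num) (hcont.intervalIntegrable _ _)
    ((hi1.add hi2).div_const 2) fun x _ => ?_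
  nlinarith [sq_nonneg (deriv tau x - f x), sq_nonneg (tau x - deriv f x)]

/-- Near-minimizers of the off-centre cell have boundary values whose difference is bounded
below. If the values were too close, a small correction would make the function periodic, and
`periodic_energy` would push `E₀(0)` down to `E₀(d)`. -/
lemma boundary_gap {r d : ℝ} (hr0 : 0 < r) (hr : r < 1 / 2)
    (hd : d = 1 / 2 - r) {q : ℝ → ℝ} (hq_meas : Measurable q) {M : ℝ} (hM : ∀ x, |q x| ≤ M)
    (hq_supp : ∀ x : ℝ, r < |x| → q x = 0) (hlt : E0fun1 q d < E0fun1 q 0) :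
    ∃ c > 0, ∃ δ₀ > 0, ∀ f, Plateau f → sqNorm f (-(1 / 2)) (1 / 2) = 1 →
      QForm (fun x => q (x - d)) f (-(1 / 2)) (1 / 2) ≤ E0fun1 q d + δ₀ →
      c ≤ |f (-(1 / 2)) - f (1 / 2)| := by
  have hab : (-(1 / 2) : ℝ) ≤ 1 / 2 := by norm_num
  set e := E0fun1 q d with he
  set e1 := E0fun1 q 0 with he1
  set m := M + |e1| with hm
  have hM0 : 0 ≤ M := (abs_nonneg _).trans (hM 0)
  have hm0 : 0 ≤ m := by positivity
  set P := |e| + (e1 - e) + (m + M) with hP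
  set T := QForm (fun _ => m) tau (-(1 / 2)) (1 / 2) with hT
  have hT0 : 0 ≤ T := QForm_const_nonneg _ hab hm0
  have hP0 : 0 ≤ P := by
    have := abs_nonneg e
    linarith
  refine ⟨min 1 ((e1 - e) / (2 * (P + 2 * T + 1))), ?_, (e1 - e) / 2, by linarith, ?_⟩
  · have : 0 < e1 - e := by linarith
    positivity
  intro f hf hN hQ
  by_contra! hlt'
  set s := f (-(1 / 2)) - f (1 / 2) with hs
  have hs1 : |s| < 1 := hlt'.trans_le (min_le_left _ _)
  have hs2 : |s| * (2 * (P + 2 * T + 1)) < e1 - e := by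
    rw [← lt_div_iff₀ (by positivity)]
    exact hlt'.trans_le (min_le_right _ _)
  have hF : Plateau (fun x => f x + s * tau x) := hf.add (tau_plateau.smul s)
  have h0 := periodic_energy hr0 hr hd hq_meas hM hq_supp hF (by
    simp only [tau_right (x := 1 / 2) (by norm_num), tau_left (x := -(1 / 2)) (by norm_num)]
    rw [hs]
    ring)
  have hqd : Measurable fun x => q (x - d) := by fun_prop
  have h1 := QForm_perturb (W := fun x => q (x - d) - e1) (m := m) (by fun_prop)
    (fun x => (abs_sub _ _).trans (by linarith [hM (x - d)])) hf.smooth tau_plateau.smooth hab s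
  rw [QForm_sub_const hqd (fun x => hM _) hF.smooth, QForm_sub_const hqd (fun x => hM _) hf.smooth,
    hN, ← hT] at h1
  have h2 := QForm_const_le hqd (fun x => hM _) hf.smooth hab m
  rw [hN] at h2
  have h3 : QForm (fun _ => m) f (-(1 / 2)) (1 / 2) ≤ P := by
    linarith [le_abs_self e]
  have h4 : |s| * QForm (fun _ => m) f (-(1 / 2)) (1 / 2) ≤ |s| * P := by gcongr
  have h5 : s ^ 2 ≤ |s| := by
    rw [← sq_abs]
    nlinarith [abs_nonneg s]
  have h6 : (|s| + s ^ 2) * T ≤ (2 * |s|) * T := by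
    gcongr
    linarith
  nlinarith [abs_nonneg s]

/-- The building block of the test functions: a near-minimizer in a cell whose scatterer sits
at one of the two extreme positions `s = ± d`, growing from left to right by a factor at least
`ρ > 1` that does not depend on how close to the minimum it is. -/
lemma good_profile {r d : ℝ} (hr0 : 0 < r) (hr : r < 1 / 2)
    (hd : d = 1 / 2 - r) {q : ℝ → ℝ} (hq_meas : Measurable q) {M : ℝ} (hM : ∀ x, |q x| ≤ M)
    (hq_supp : ∀ x : ℝ, r < |x| → q x = 0) (hq_symm : ∀ x : ℝ, q (-x) = q x)
    (hlt : E0fun1 q d < E0fun1 q 0) :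
    ∃ ρ > 1, ∃ B > 0, ∃ δ₀ > 0, ∀ δ > 0, δ ≤ δ₀ → ∃ s, (s = d ∨ s = -d) ∧ ∃ f, Plateau f ∧
      (∀ x, 0 < f x) ∧ sqNorm f (-(1 / 2)) (1 / 2) = 1 ∧
      QForm (fun x => q (x - s)) f (-(1 / 2)) (1 / 2) ≤ E0fun1 q d + δ ∧
      f (1 / 2) ≤ B ∧ ρ * f (-(1 / 2)) ≤ f (1 / 2) := by
  have hab : (-(1 / 2) : ℝ) ≤ 1 / 2 := by norm_num
  obtain ⟨c, hc, δ₀, hδ₀, hgap⟩ := boundary_gap hr0 hr hd hq_meas hM hq_supp hlt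
  have hM0 : 0 ≤ M := (abs_nonneg _).trans (hM 0)
  have hT0 := QForm_const_nonneg tau hab zero_le_one
  set B := |E0fun1 q d| + δ₀ + (1 + M) + QForm (fun _ => 1) tau (-(1 / 2)) (1 / 2) with hB
  have hB0 : 0 < B := by positivity
  refine ⟨1 + c / B, by simp only [gt_iff_lt, lt_add_iff_pos_right]; positivity, B, hB0, δ₀, hδ₀,
    fun δ hδ hδδ => ?_⟩
  obtain ⟨f, hf, hpos, hN, hQ⟩ := plateau_minimizer (V := fun x => q (x - d)) (by fun_prop)
    (fun x => hM _) hδ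
  change _ ≤ E0fun1 q d + δ at hQ
  have hg := hgap f hf hN (hQ.trans (by linarith))
  have hfin : ∀ s f, Plateau f → (∀ x, 0 < f x) → sqNorm f (-(1 / 2)) (1 / 2) = 1 →
      QForm (fun x => q (x - s)) f (-(1 / 2)) (1 / 2) ≤ E0fun1 q d + δ →
      c ≤ f (1 / 2) - f (-(1 / 2)) →
      f (1 / 2) ≤ B ∧ (1 + c / B) * f (-(1 / 2)) ≤ f (1 / 2) := by
    intro s f hf hpos hN hQ hdiff
    have h1 : f (1 / 2) ≤ B := by
      have h2 := plateau_boundary_le hf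
      have h3 := QForm_const_le (V := fun x => q (x - s)) (by fun_prop) (fun x => hM _)
        hf.smooth hab 1
      rw [hN] at h3
      have := le_abs_self (E0fun1 q d)
      linarith [abs_nonneg (E0fun1 q d)]
    refine ⟨h1, ?_⟩
    have h4 : c / B * f (-(1 / 2)) ≤ c := by
      rw [div_mul_eq_mul_div, div_le_iff₀ hB0]
      gcongr
      linarith
    linarith
  rcases le_total (f (-(1 / 2))) (f (1 / 2)) with h | h
  · rw [abs_of_nonpos (by linarith)] at hg
    exact ⟨d, Or.inl rfl, f, hf, hpos, hN, hQ, hfin d f hf hpos hN hQ (by linarith)⟩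
  · rw [abs_of_nonneg (by linarith)] at hg
    have hN' := (sqNorm_reflect f (1 / 2)).trans hN
    have hQ' : QForm (fun x => q (x - -d)) (fun x => f (-x)) (-(1 / 2)) (1 / 2) ≤
        E0fun1 q d + δ := by
      refine le_trans (le_of_eq ?_) hQ
      rw [← QForm_reflect (fun x => q (x - d)) f (1 / 2)]
      congr 1
      ext x
      rw [← hq_symm]
      congr 1
      ring
    exact ⟨-d, Or.inr rfl, _, hf.reflect, fun x => hpos _, hN', hQ',
      hfin (-d) _ hf.reflect (fun x => hpos _) hN' hQ' (by rw [neg_neg]; linarith)⟩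

/-! ### Gluing plateau functions along a chain of cells -/

/-- `glue f n` places a copy of `f i` in the cell centred at `i + 1`, for `i = 0, …, n`. The
copies fit together when the right value of `f i` is the left value of `f (i + 1)`; writing the
result as a sum of increments makes its smoothness evident. -/
def glue (f : ℕ → ℝ → ℝ) : ℕ → ℝ → ℝ
  | 0, x => f 0 (x - 1)
  | n + 1, x => glue f n x + (f (n + 1) (x - (n + 2)) - f (n + 1) (-(1 / 2)))

lemma glue_smooth {f : ℕ → ℝ → ℝ} (hf : ∀ i, Plateau (f i)) (n : ℕ) :
    ContDiff ℝ (⊤ : ℕ∞) (glue f n) := by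
  induction n with
  | zero => exact (hf 0).smooth.comp (contDiff_id.sub contDiff_const)
  | succ n ih =>
    exact ih.add (((hf (n + 1)).smooth.comp (contDiff_id.sub contDiff_const)).sub contDiff_const)

lemma glue_left {f : ℕ → ℝ → ℝ} (hf : ∀ i, Plateau (f i)) {i n : ℕ} (hin : i ≤ n) {x : ℝ}
    (hx : x ≤ i + 3 / 2) : glue f n x = glue f i x := by
  induction n, hin using Nat.le_induction with
  | base => rfl
  | succ n hn ih =>
    have : (i : ℝ) ≤ n := by exact_mod_cast hn
    rw [glue, ih, (hf (n + 1)).left (x - (n + 2)) (by linarith)]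
    ring

lemma glue_right {f : ℕ → ℝ → ℝ} (hf : ∀ i, Plateau (f i)) {n : ℕ}
    (hm : ∀ i < n, f i (1 / 2) = f (i + 1) (-(1 / 2))) {x : ℝ}
    (hx : n + 1 / 2 ≤ x) : glue f n x = f n (x - (n + 1)) := by
  induction n with
  | zero => simp [glue]
  | succ n ih =>
    push_cast at hx ⊢
    rw [glue, ih (fun i hi => hm i (by omega)) (by linarith),
      (hf n).right (x - (n + 1)) (by linarith), hm n (by omega)]
    rw [show x - (n + 2) = x - (n + 1 + 1) by ring]
    ring

lemma glue_cell {f : ℕ → ℝ → ℝ} (hf : ∀ i, Plateau (f i)) {n : ℕ}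
    (hm : ∀ i < n, f i (1 / 2) = f (i + 1) (-(1 / 2))) {i : ℕ} (hi : i ≤ n) {x : ℝ}
    (hx : x ∈ Ioo (-(1 / 2) : ℝ) (1 / 2)) : glue f n (x + (i + 1)) = f i x := by
  rw [glue_left hf hi (by linarith [hx.2]),
    glue_right hf (fun j hj => hm j (by omega)) (by linarith [hx.1])]
  congr 1
  ring

lemma VL_cell {r dmax : ℝ} (hdmax : dmax = 1 / 2 - r) {q : ℝ → ℝ}
    (hq_supp : ∀ x : ℝ, r < |x| → q x = 0) {L : ℕ} {ω : ℕ → ℝ} (hω : ∀ i, |ω i| ≤ dmax)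
    {i : ℕ} (hi : i < L) {x : ℝ} (hx : x ∈ Ioo (-(1 / 2) : ℝ) (1 / 2)) :
    VL q L (fun j => ω j) (x + (i + 1)) = q (x - ω i) := by
  unfold VL
  rw [Finset.sum_eq_single ⟨i, hi⟩]
  · congr 1
    ring
  · intro j _ hj
    have hne : ((j : ℕ) : ℤ) ≠ (i : ℤ) := by
      intro h
      exact hj (Fin.ext (by exact_mod_cast h))
    have := supp_cell hdmax hq_supp hne hx (hω j)
    rw [← this]
    congr 1
    push_cast
    ring
  · simp

lemma VL_bdd {q : ℝ → ℝ} {M : ℝ} (hM : ∀ x, |q x| ≤ M) (L : ℕ) (ω : Fin L → ℝ) (x : ℝ) :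
    |VL q L ω x| ≤ L * M := by
  refine (Finset.abs_sum_le_sum_abs _ _).trans ?_
  refine (Finset.sum_le_sum fun i _ => hM _).trans ?_
  simp

lemma VL_meas {q : ℝ → ℝ} (hq_meas : Measurable q) (L : ℕ) (ω : Fin L → ℝ) :
    Measurable (VL q L ω) := by
  unfold VL
  fun_prop

lemma lamD_mul_le {q : ℝ → ℝ} (hq_meas : Measurable q) {M : ℝ} (hM : ∀ x, |q x| ≤ M)
    (L : ℕ) (ω : Fin L → ℝ) {ψ : ℝ → ℝ} (hψ : ContDiff ℝ (⊤ : ℕ∞) ψ) {a b : ℝ} (ha : 1 / 2 < a)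
    (hb : b < L + 1 / 2) (hsupp : ∀ x, ψ x ≠ 0 → x ∈ Icc a b)
    (hpos : 0 < sqNorm ψ (1 / 2) (L + 1 / 2)) :
    lamD q L ω * sqNorm ψ (1 / 2) (L + 1 / 2) ≤ QForm (VL q L ω) ψ (1 / 2) (L + 1 / 2) := by
  have hab : (1 / 2 : ℝ) ≤ L + 1 / 2 := by linarith [(Nat.cast_nonneg L : (0 : ℝ) ≤ L)]
  have hts : tsupport ψ ⊆ Icc a b := closure_minimal hsupp isClosed_Icc
  rw [← le_div_iff₀ hpos]
  refine csInf_le ⟨-(L * M), ?_⟩ ⟨ψ, hψ, ?_, ?_, ?_, ?_⟩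
  · rintro _ ⟨φ, hφ, -, -, -, rfl⟩
    rw [integral_Ioo_eq_interval hab, integral_Ioo_eq_interval hab]
    exact quot_ge (VL_meas hq_meas L ω) (VL_bdd hM L ω) hab hφ.continuous.continuousOn
      (smooth_deriv_continuous hφ).continuousOn
  · exact isCompact_Icc.of_isClosed_subset (isClosed_tsupport ψ) hts
  · exact hts.trans fun x hx => ⟨ha.trans_le hx.1, hx.2.trans_lt hb⟩
  · rintro rfl
    simp [sqNorm] at hpos
  · rw [integral_Ioo_eq_interval hab, integral_Ioo_eq_interval hab]
    rfl

/-- Energy of a glued chain: cellwise energy bounds `e ‖f i‖² + R i` add up. -/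
lemma lamD_chain {r dmax : ℝ} (hdmax : dmax = 1 / 2 - r) {q : ℝ → ℝ}
    (hq_meas : Measurable q) {M : ℝ} (hM : ∀ x, |q x| ≤ M)
    (hq_supp : ∀ x : ℝ, r < |x| → q x = 0) {n : ℕ} {ω : ℕ → ℝ} (hω : ∀ i, |ω i| ≤ dmax)
    {f : ℕ → ℝ → ℝ} (hf : ∀ i, Plateau (f i))
    (hm : ∀ i < n, f i (1 / 2) = f (i + 1) (-(1 / 2)))
    (h0 : ∀ x ≤ -(1 / 4), f 0 x = 0) (hn : ∀ x ≥ 1 / 4, f n x = 0) {e : ℝ} {R : ℕ → ℝ}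
    (hR : ∀ i ≤ n, QForm (fun x => q (x - ω i)) (f i) (-(1 / 2)) (1 / 2) ≤
      e * sqNorm (f i) (-(1 / 2)) (1 / 2) + R i)
    (hpos : 0 < ∑ i ∈ Finset.range (n + 1), sqNorm (f i) (-(1 / 2)) (1 / 2)) :
    lamD q (n + 1) (fun i => ω i) *
        ∑ i ∈ Finset.range (n + 1), sqNorm (f i) (-(1 / 2)) (1 / 2) ≤
      e * (∑ i ∈ Finset.range (n + 1), sqNorm (f i) (-(1 / 2)) (1 / 2)) +
        ∑ i ∈ Finset.range (n + 1), R i := by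
  have hs := glue_smooth hf n
  set a : ℕ → ℝ := fun k => -(1 / 2) + (k + 1) with ha
  have ha1 : ∀ k, a (k + 1) = 1 / 2 + (k + 1) := by
    intro k
    simp only [ha]
    push_cast
    ring
  have ha0 : (1 / 2 : ℝ) = a 0 := by simp only [ha]; norm_num
  have han : ((n + 1 : ℕ) : ℝ) + 1 / 2 = a (n + 1) := by
    rw [ha1]
    push_cast
    ring
  have eN : sqNorm (glue f n) (1 / 2) ((n + 1 : ℕ) + 1 / 2) =
      ∑ i ∈ Finset.range (n + 1), sqNorm (f i) (-(1 / 2)) (1 / 2) := by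
    have h1 : ∀ i ∈ Finset.range (n + 1), sqNorm (f i) (-(1 / 2)) (1 / 2) =
        ∫ x in a i..a (i + 1), glue f n x ^ 2 := by
      intro i hi
      rw [ha1]
      change _ = sqNorm (glue f n) (-(1 / 2) + (i + 1)) (1 / 2 + (i + 1))
      rw [sqNorm_shift]
      exact sqNorm_congr (by norm_num) fun x hx =>
        (glue_cell hf hm (Nat.lt_succ_iff.1 (Finset.mem_range.1 hi)) hx).symm
    rw [Finset.sum_congr rfl h1, intervalIntegral.sum_integral_adjacent_intervals
      fun k _ => sqNorm_int hs _ _, han, sqNorm, ← ha0]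
  have eQ : QForm (VL q (n + 1) (fun i => ω i)) (glue f n) (1 / 2) ((n + 1 : ℕ) + 1 / 2) =
      ∑ i ∈ Finset.range (n + 1),
        QForm (fun x => q (x - ω i)) (f i) (-(1 / 2)) (1 / 2) := by
    have h1 : ∀ i ∈ Finset.range (n + 1),
        QForm (fun x => q (x - ω i)) (f i) (-(1 / 2)) (1 / 2) =
        ∫ x in a i..a (i + 1), (deriv (glue f n) x ^ 2 +
          VL q (n + 1) (fun i => ω i) x * glue f n x ^ 2) := by
      intro i hi
      rw [ha1]
      change _ = QForm (VL q (n + 1) (fun i => ω i)) (glue f n) (-(1 / 2) + (i + 1))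
        (1 / 2 + (i + 1))
      rw [QForm_shift]
      exact QForm_congr (by norm_num)
        (fun x hx => (VL_cell hdmax hq_supp hω (Finset.mem_range.1 hi) hx).symm)
        fun x hx => (glue_cell hf hm (Nat.lt_succ_iff.1 (Finset.mem_range.1 hi)) hx).symm
    rw [Finset.sum_congr rfl h1, intervalIntegral.sum_integral_adjacent_intervals
      fun k _ => QForm_int (VL_meas hq_meas _ _) (VL_bdd hM _ _) hs _ _, han, QForm, ← ha0]
  have hsupp : ∀ x, glue f n x ≠ 0 → x ∈ Icc (3 / 4 : ℝ) (n + 5 / 4) := by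
    intro x hx
    by_contra hcon
    rw [mem_Icc, not_and_or] at hcon
    apply hx
    rcases hcon with h | h
    · rw [glue_left hf (Nat.zero_le n) (by push_cast; linarith), glue]
      exact h0 _ (by linarith)
    · rw [glue_right hf hm (by linarith)]
      exact hn _ (by linarith)
  have key := lamD_mul_le hq_meas hM (n + 1) (fun i => ω i) hs (by norm_num : (1 / 2 : ℝ) < 3 / 4)
    (by push_cast; linarith) hsupp (eN ▸ hpos)
  rw [eN, eQ] at key
  refine key.trans ?_
  rw [Finset.mul_sum, ← Finset.sum_add_distrib]
  exact Finset.sum_le_sum fun i hi => hR i (Nat.lt_succ_iff.1 (Finset.mem_range.1 hi))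

/-! ### Test functions driven by a walk -/

/-- The walk read off from the signs `u 1, u 2, …`: position after `k` steps. -/
def walk (u : ℕ → Bool) (k : ℕ) : ℤ := ∑ j ∈ Finset.range k, if u (j + 1) then 1 else -1

lemma walk_succ (u : ℕ → Bool) (k : ℕ) :
    walk u (k + 1) = walk u k + if u (k + 1) then 1 else -1 :=
  Finset.sum_range_succ _ _

/-- The cell functions of the test function on `N + 2` cells. The two outermost cells carry the
cutoff `tau`, the inner ones a multiple of `f` or of its mirror image according to the sign `u`.
`v i` is the prescribed value at the interface between cells `i` and `i + 1`. -/
def walkCell (f : ℝ → ℝ) (u : ℕ → Bool) (v : ℕ → ℝ) (N : ℕ) : ℕ → ℝ → ℝ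
  | 0 => fun x => v 0 * tau x
  | i + 1 => if i < N then
      (if u (i + 1) then fun x => v i / f (-(1 / 2)) * f x
        else fun x => v i / f (1 / 2) * f (-x))
      else fun x => v N * tau (-x)

lemma QForm_tau_le {V : ℝ → ℝ} (hV : Measurable V) {M : ℝ} (hM : ∀ x, |V x| ≤ M) :
    QForm V tau (-(1 / 2)) (1 / 2) ≤ QForm (fun _ => M) tau (-(1 / 2)) (1 / 2) := by
  refine intervalIntegral.integral_mono_on (by norm_num) (QForm_int hV hM tau_plateau.smooth _ _)
    (QForm_int measurable_const (M := |M|) (fun _ => le_rfl) tau_plateau.smooth _ _) fun x _ => ?_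
  have := (abs_le.1 (hM x)).2
  nlinarith [sq_nonneg (tau x)]

/-- If the walk reaches a height `K` above both its start and its end, then cutting the chain of
near-minimizers off at both ends costs an energy of order `ρ ^ (-2 K)` only. -/
lemma lamD_walk {r dmax : ℝ} (hdmax : dmax = 1 / 2 - r) {q : ℝ → ℝ} (hq_meas : Measurable q)
    {M : ℝ} (hM : ∀ x, |q x| ≤ M) (hq_supp : ∀ x : ℝ, r < |x| → q x = 0)
    (hq_symm : ∀ x : ℝ, q (-x) = q x) {s : ℝ} (hs : |s| ≤ dmax) {f : ℝ → ℝ} (hf : Plateau f)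
    (hpos : ∀ x, 0 < f x) (hf1 : sqNorm f (-(1 / 2)) (1 / 2) = 1) {e : ℝ}
    (hQ : QForm (fun x => q (x - s)) f (-(1 / 2)) (1 / 2) ≤ e) {B ρ : ℝ} (hB : f (1 / 2) ≤ B)
    (hρ : 1 < ρ) (hρf : ρ * f (-(1 / 2)) ≤ f (1 / 2)) {T : ℝ} (hT0 : 0 ≤ T)
    (hT : QForm (fun _ => M) tau (-(1 / 2)) (1 / 2) ≤
      e * sqNorm tau (-(1 / 2)) (1 / 2) + T)
    {N m K : ℕ} (hm : m < N) (u : ℕ → Bool) (h1 : (K : ℤ) ≤ walk u (m + 1))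
    (h2 : walk u N + K ≤ walk u (m + 1)) :
    lamD q (N + 2) (fun i => if u i then s else -s) ≤ e + 2 * T * B ^ 2 / ρ ^ (2 * K) := by
  set α := f (-(1 / 2)) with hα
  set β := f (1 / 2) with hβ
  have hα0 : 0 < α := hpos _
  have hβ0 : 0 < β := hpos _
  set g := β / α with hg
  have hgρ : ρ ≤ g := (le_div_iff₀ hα0).2 hρf
  have hg0 : 0 < g := by positivity
  have hg1 : 1 ≤ g := by linarith
  set v : ℕ → ℝ := fun k => g ^ walk u k with hv
  have hv0 : ∀ k, 0 < v k := fun k => zpow_pos hg0 _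
  have hstep : ∀ k, v (k + 1) = if u (k + 1) then v k * g else v k / g := by
    intro k
    simp only [hv, walk_succ]
    split_ifs
    · rw [zpow_add₀ hg0.ne', zpow_one]
    · rw [zpow_add₀ hg0.ne', zpow_neg_one, div_eq_mul_inv]
  set F := walkCell f u v N with hF
  have hFi : ∀ i < N, F (i + 1) = if u (i + 1) then fun x => v i / α * f x
      else fun x => v i / β * f (-x) := by
    intro i hi
    simp only [hF, walkCell, if_pos hi, hα, hβ]
  have hFe : ∀ i, ¬ i < N → F (i + 1) = fun x => v N * tau (-x) := by
    intro i hi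
    simp only [hF, walkCell, if_neg hi]
  have hF0 : F 0 = fun x => v 0 * tau x := rfl
  have hP : ∀ i, Plateau (F i) := by
    intro i
    cases i with
    | zero => exact tau_plateau.smul _
    | succ i =>
      by_cases hi : i < N
      · rw [hFi i hi]
        split_ifs
        · exact hf.smul _
        · exact hf.reflect.smul _
      · rw [hFe i hi]
        exact tau_plateau.reflect.smul _
  have hleft : ∀ i ≤ N, F (i + 1) (-(1 / 2)) = v i := by
    intro i hi
    by_cases hi' : i < N
    · rw [hFi i hi']
      split_ifs
      · exact div_mul_cancel₀ _ hα0.ne'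
      · simp only [neg_neg]
        exact div_mul_cancel₀ _ hβ0.ne'
    · rw [hFe i hi', show i = N by omega]
      beta_reduce
      rw [neg_neg, tau_right (by norm_num), mul_one]
  have hright : ∀ i ≤ N, F i (1 / 2) = v i := by
    intro i hi
    cases i with
    | zero =>
      rw [hF0]
      beta_reduce
      rw [tau_right (by norm_num), mul_one]
    | succ i =>
      rw [hFi i (by omega), hstep]
      split_ifs
      · simp only [hg, ← hβ]
        field_simp
      · simp only [hg, ← hα]
        field_simp
  have hω : ∀ i, |(if u i then s else -s)| ≤ dmax := by
    intro i
    split_ifs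
    · exact hs
    · rwa [abs_neg]
  set R : ℕ → ℝ := fun i => if i = 0 then T * v 0 ^ 2 else if i = N + 1 then T * v N ^ 2 else 0
    with hR
  have hmeas : ∀ t : ℝ, Measurable fun x => q (x - t) := fun t => by fun_prop
  have hrefl : ∀ (V h : ℝ → ℝ), QForm V (fun x => h (-x)) (-(1 / 2)) (1 / 2) =
      QForm (fun x => V (-x)) h (-(1 / 2)) (1 / 2) := by
    intro V h
    rw [← QForm_reflect (fun x => V (-x)) h]
    simp only [neg_neg]
  have hnorm : ∀ i < N, sqNorm (F (i + 1)) (-(1 / 2)) (1 / 2) =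
      if u (i + 1) then (v i / α) ^ 2 else (v i / β) ^ 2 := by
    intro i hi
    rw [hFi i hi]
    split_ifs
    · rw [sqNorm_smul, hf1, mul_one]
    · rw [sqNorm_smul (fun x => f (-x)), sqNorm_reflect, hf1, mul_one]
  have hcell : ∀ i ≤ N + 1, QForm (fun x => q (x - if u i then s else -s)) (F i)
      (-(1 / 2)) (1 / 2) ≤ e * sqNorm (F i) (-(1 / 2)) (1 / 2) + R i := by
    intro i hi
    cases i with
    | zero =>
      rw [hF0, QForm_smul _ _ _ _ _ (smooth_differentiable tau_plateau.smooth), sqNorm_smul]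
      simp only [hR, if_true]
      nlinarith [QForm_tau_le (hmeas (if u 0 then s else -s)) (fun x => hM _), sq_nonneg (v 0)]
    | succ i =>
      by_cases hi' : i < N
      · have hR0 : R (i + 1) = 0 := by
          simp only [hR]
          rw [if_neg (by omega), if_neg (by omega)]
        rw [hnorm i hi', hFi i hi', hR0, add_zero]
        split_ifs
        · rw [QForm_smul _ _ _ _ _ (smooth_differentiable hf.smooth), mul_comm e]
          gcongr
        · rw [QForm_smul _ (fun x => f (-x)) _ _ _ (smooth_differentiable hf.reflect.smooth),
            mul_comm e, hrefl]
          -- evenness of `q` turns the mirrored potential into the one centred at `s`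
          have : (fun x => q (-x - -s)) = fun x => q (x - s) := by
            ext x
            rw [← hq_symm]
            ring_nf
          rw [this]
          gcongr
      · have hRN : R (i + 1) = T * v N ^ 2 := by
          simp only [hR]
          rw [if_neg (by omega), if_pos (by omega)]
        rw [hFe i hi', hRN, QForm_smul _ (fun x => tau (-x)) _ _ _
          (smooth_differentiable tau_plateau.reflect.smooth), sqNorm_smul (fun x => tau (-x)),
          sqNorm_reflect, hrefl]
        have hmeas' : Measurable fun x => q (-x - if u (i + 1) then s else -s) :=
          (hmeas (if u (i + 1) then s else -s)).comp measurable_neg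
        nlinarith [QForm_tau_le hmeas' (fun x => hM _), sq_nonneg (v N)]
  have hRsum : ∑ i ∈ Finset.range (N + 1 + 1), R i = T * v 0 ^ 2 + T * v N ^ 2 := by
    rw [Finset.sum_range_succ, Finset.sum_range_succ']
    have : ∑ k ∈ Finset.range N, R (k + 1) = 0 := by
      refine Finset.sum_eq_zero fun k hk => ?_
      have := Finset.mem_range.1 hk
      simp only [hR]
      rw [if_neg (by omega), if_neg (by omega)]
    rw [this]
    simp only [hR, if_true]
    rw [if_neg (by omega)]
    ring
  set Sg := ∑ i ∈ Finset.range (N + 1 + 1), sqNorm (F i) (-(1 / 2)) (1 / 2) with hSg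
  have hSge : (v (m + 1) / β) ^ 2 ≤ Sg := by
    have h3 : sqNorm (F (m + 1)) (-(1 / 2)) (1 / 2) ≤ Sg :=
      Finset.single_le_sum (f := fun i => sqNorm (F i) (-(1 / 2)) (1 / 2))
        (fun i _ => sqNorm_nonneg _ (by norm_num)) (Finset.mem_range.2 (by omega))
    refine le_trans ?_ h3
    rw [hnorm m hm, hstep]
    have := hv0 m
    split_ifs
    · refine le_of_eq ?_
      simp only [hg]
      field_simp
    · gcongr
      exact div_le_self this.le hg1
  have hSg0 : 0 < Sg := lt_of_lt_of_le (by have := hv0 (m + 1); positivity) hSge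
  have key := lamD_chain hdmax hq_meas hM hq_supp (n := N + 1)
    (ω := fun i => if u i then s else -s) hω hP
    (fun i hi => by rw [hright i (by omega), hleft i (by omega)])
    (fun x hx => by rw [hF0]; beta_reduce; rw [tau_left hx, mul_zero])
    (fun x hx => by
      rw [hFe N (by omega)]; beta_reduce; rw [tau_left (by linarith), mul_zero]) hcell hSg0
  rw [hRsum] at key
  have hpow : ρ ^ K ≤ g ^ (K : ℤ) := by
    rw [zpow_natCast]
    gcongr
  have hb0 : v 0 * ρ ^ K ≤ v (m + 1) := by
    have : v 0 = 1 := by simp [hv, walk]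
    rw [this, one_mul]
    exact hpow.trans (zpow_le_zpow_right₀ hg1 h1)
  have hbN : v N * ρ ^ K ≤ v (m + 1) := by
    calc v N * ρ ^ K ≤ v N * g ^ (K : ℤ) := by
          have := (hv0 N).le
          gcongr
      _ = g ^ (walk u N + K) := (zpow_add₀ hg0.ne' _ _).symm
      _ ≤ _ := zpow_le_zpow_right₀ hg1 h2
  have hρK : 0 < ρ ^ K := by positivity
  have hsq0 : v 0 ^ 2 * ρ ^ (2 * K) ≤ v (m + 1) ^ 2 := by
    rw [mul_comm 2 K, pow_mul, ← mul_pow]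
    have := hv0 0
    gcongr
  have hsqN : v N ^ 2 * ρ ^ (2 * K) ≤ v (m + 1) ^ 2 := by
    rw [mul_comm 2 K, pow_mul, ← mul_pow]
    have := hv0 N
    gcongr
  have hvB : v (m + 1) ^ 2 ≤ B ^ 2 * Sg := by
    rw [div_pow, div_le_iff₀ (by positivity)] at hSge
    calc v (m + 1) ^ 2 ≤ Sg * β ^ 2 := hSge
      _ ≤ Sg * B ^ 2 := by gcongr
      _ = _ := mul_comm _ _
  refine le_of_mul_le_mul_right (key.trans ?_) hSg0
  rw [add_mul]
  gcongr
  rw [div_mul_eq_mul_div, le_div_iff₀ (by positivity)]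
  nlinarith

/-! ### Fluctuations of the simple random walk -/

/-- The sum of the `±1` steps encoded by `b`. -/
def stepSum {n : ℕ} (b : Fin n → Bool) : ℤ := ∑ i, if b i then 1 else -1

lemma sum_stepSum_succ (n : ℕ) (g : ℤ → ℤ) :
    ∑ b : Fin (n + 1) → Bool, g (stepSum b) =
      ∑ b : Fin n → Bool, (g (stepSum b + 1) + g (stepSum b - 1)) := by
  rw [← (Fin.consEquiv fun _ => Bool).sum_comp, Fintype.sum_prod_type, Fintype.sum_bool,
    ← Finset.sum_add_distrib]
  refine Finset.sum_congr rfl fun b _ => ?_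
  simp only [stepSum, Fin.consEquiv_apply, Fin.sum_univ_succ, Fin.cons_zero, Fin.cons_succ]
  simp [add_comm, sub_eq_add_neg]

lemma sum_one (n : ℕ) : ∑ _b : Fin n → Bool, (1 : ℤ) = 2 ^ n := by simp

lemma sum_stepSum_sq (n : ℕ) : ∑ b : Fin n → Bool, stepSum b ^ 2 = n * 2 ^ n := by
  induction n with
  | zero => simp [stepSum]
  | succ n ih =>
    rw [sum_stepSum_succ n (fun z => z ^ 2)]
    have : ∀ b : Fin n → Bool, (stepSum b + 1) ^ 2 + (stepSum b - 1) ^ 2 =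
        2 * stepSum b ^ 2 + 2 * 1 := fun b => by ring
    simp only [this]
    rw [Finset.sum_add_distrib, ← Finset.mul_sum, ← Finset.mul_sum, sum_one, ih]
    push_cast
    ring

lemma sum_stepSum_four (n : ℕ) :
    ∑ b : Fin n → Bool, stepSum b ^ 4 = (3 * n ^ 2 - 2 * n) * 2 ^ n := by
  induction n with
  | zero => simp [stepSum]
  | succ n ih =>
    rw [sum_stepSum_succ n (fun z => z ^ 4)]
    have : ∀ b : Fin n → Bool, (stepSum b + 1) ^ 4 + (stepSum b - 1) ^ 4 =
        2 * stepSum b ^ 4 + 12 * stepSum b ^ 2 + 2 * 1 := fun b => by ring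
    simp only [this]
    rw [Finset.sum_add_distrib, Finset.sum_add_distrib, ← Finset.mul_sum, ← Finset.mul_sum,
      ← Finset.mul_sum, sum_one, ih, sum_stepSum_sq]
    push_cast
    ring

lemma stepSum_not {n : ℕ} (b : Fin n → Bool) : stepSum (fun i => !b i) = -stepSum b := by
  unfold stepSum
  rw [← Finset.sum_neg_distrib]
  refine Finset.sum_congr rfl fun i _ => ?_
  cases h : b i <;> simp [h]

/-- The walks of length `n` ending at height at least `K`. -/
def upSet (n K : ℕ) : Finset (Fin n → Bool) := {b | (K : ℤ) ≤ stepSum b}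

/-- The walks of length `n` ending at height at most `-K`. -/
def downSet (n K : ℕ) : Finset (Fin n → Bool) := {b | stepSum b ≤ -(K : ℤ)}

lemma card_downSet (n K : ℕ) : (downSet n K).card = (upSet n K).card := by
  refine Finset.card_bij' (fun b _ i => !b i) (fun b _ i => !b i) ?_ ?_ ?_ ?_
  · intro b hb
    simp only [downSet, upSet, Finset.mem_filter, Finset.mem_univ, true_and] at hb ⊢
    rw [stepSum_not]
    linarith
  · intro b hb
    simp only [downSet, upSet, Finset.mem_filter, Finset.mem_univ, true_and] at hb ⊢
    rw [stepSum_not]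
    linarith
  · intro b _
    simp
  · intro b _
    simp

/-- A Paley–Zygmund bound: after `2 K²` steps the walk is at height at least `K` with
probability at least `1 / 24`. -/
lemma card_upSet {K : ℕ} (hK : 1 ≤ K) : 2 ^ (2 * K ^ 2) ≤ 24 * (upSet (2 * K ^ 2) K).card := by
  set n := 2 * K ^ 2 with hn
  have hnK : (n : ℤ) = 2 * K ^ 2 := by rw [hn]; push_cast; ring
  have hK' : (1 : ℤ) ≤ K := by exact_mod_cast hK
  have hn0 : (0 : ℤ) < n := by rw [hnK]; positivity
  -- the parabola `12 n X - 6 n² - X²` lies below `36 n²` times the indicator of `X ≥ n / 2`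
  have hpt : ∀ b : Fin n → Bool, 12 * (n : ℤ) * stepSum b ^ 2 - 6 * n ^ 2 * 1 - stepSum b ^ 4 ≤
      36 * n ^ 2 * ((if b ∈ upSet n K then 1 else 0) + if b ∈ downSet n K then 1 else 0) := by
    intro b
    simp only [upSet, downSet, Finset.mem_filter, Finset.mem_univ, true_and]
    have hX : 12 * (n : ℤ) * stepSum b ^ 2 - 6 * n ^ 2 * 1 - stepSum b ^ 4 ≤ 36 * n ^ 2 := by
      nlinarith [sq_nonneg (stepSum b ^ 2 - 6 * n), sq_nonneg (n : ℤ)]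
    have hn2 : (0 : ℤ) ≤ 36 * n ^ 2 := by positivity
    by_cases h1 : (K : ℤ) ≤ stepSum b
    · rw [if_pos h1]
      split_ifs <;> linarith
    · by_cases h2 : stepSum b ≤ -(K : ℤ)
      · rw [if_pos h2, if_neg h1]
        linarith
      · rw [if_neg h1, if_neg h2]
        have h3 : stepSum b ^ 2 ≤ K ^ 2 := by
          rw [sq_le_sq, abs_of_nonneg (by linarith : (0 : ℤ) ≤ K), abs_le]
          constructor <;> linarith
        nlinarith [sq_nonneg (stepSum b ^ 2)]
  have hsum := Finset.sum_le_sum fun b (_ : b ∈ (Finset.univ : Finset (Fin n → Bool))) => hpt b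
  rw [Finset.sum_sub_distrib, Finset.sum_sub_distrib, ← Finset.mul_sum, ← Finset.mul_sum,
    ← Finset.mul_sum, Finset.sum_add_distrib, sum_one, sum_stepSum_sq, sum_stepSum_four] at hsum
  simp only [Finset.sum_boole, Finset.filter_univ_mem] at hsum
  rw [card_downSet] at hsum
  have h2n : (0 : ℤ) < 2 ^ n := by positivity
  have : (2 : ℤ) ^ n ≤ 24 * ((upSet n K).card : ℤ) := by
    have h3 : 3 * (n : ℤ) ^ 2 * 2 ^ n ≤ 3 * (n : ℤ) ^ 2 * (24 * ((upSet n K).card : ℤ)) := by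
      nlinarith [mul_pos hn0 h2n]
    exact le_of_mul_le_mul_left h3 (by positivity)
  exact_mod_cast this

/-- Extension of a finite sign pattern to `ℕ` by a constant. -/
def extendBool {L : ℕ} (b : Fin L → Bool) (i : ℕ) : Bool := if h : i < L then b ⟨i, h⟩ else false

/-- A sign pattern on `2 n + 2` sites made of two blocks of `n` sites and one site at each end. -/
def concat {n : ℕ} (p : (Fin n → Bool) × (Fin n → Bool) × Bool × Bool) :
    Fin (2 * n + 2) → Bool := fun i =>
  if i.1 = 0 then p.2.2.1 else
    if h : i.1 - 1 < n then p.1 ⟨i.1 - 1, h⟩ else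
      if h : i.1 - 1 - n < n then p.2.1 ⟨i.1 - 1 - n, h⟩ else p.2.2.2

lemma extend_concat_first {n : ℕ} (p : (Fin n → Bool) × (Fin n → Bool) × Bool × Bool)
    (i : Fin n) : extendBool (concat p) (i.1 + 1) = p.1 i := by
  have := i.2
  rw [extendBool, dif_pos (by omega), concat, if_neg (by simp), dif_pos (by simp)]
  simp

lemma extend_concat_second {n : ℕ} (p : (Fin n → Bool) × (Fin n → Bool) × Bool × Bool)
    (i : Fin n) : extendBool (concat p) (n + i.1 + 1) = p.2.1 i := by
  have := i.2
  rw [extendBool, dif_pos (by omega), concat, if_neg (by simp), dif_neg (by simp),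
    dif_pos (by simp)]
  simp

lemma concat_injective {n : ℕ} : Function.Injective (concat (n := n)) := by
  intro p p' h
  have h1 : p.1 = p'.1 := by
    ext i
    rw [← extend_concat_first, h, extend_concat_first]
  have h2 : p.2.1 = p'.2.1 := by
    ext i
    rw [← extend_concat_second, h, extend_concat_second]
  have h3 : p.2.2.1 = p'.2.2.1 := by simpa [concat] using congrFun h ⟨0, by omega⟩
  have h4 : p.2.2.2 = p'.2.2.2 := by
    have := congrFun h ⟨2 * n + 1, by omega⟩
    simp only [concat] at this
    rwa [if_neg (by omega), if_neg (by omega), dif_neg (by omega), dif_neg (by omega),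
      dif_neg (by omega), dif_neg (by omega)] at this
  exact Prod.ext h1 (Prod.ext h2 (Prod.ext h3 h4))

lemma walk_concat_first {n : ℕ} (p : (Fin n → Bool) × (Fin n → Bool) × Bool × Bool) :
    walk (extendBool (concat p)) n = stepSum p.1 := by
  rw [walk, Finset.sum_range, stepSum]
  simp only [extend_concat_first]

lemma walk_concat_second {n : ℕ} (p : (Fin n → Bool) × (Fin n → Bool) × Bool × Bool) :
    walk (extendBool (concat p)) (2 * n) = stepSum p.1 + stepSum p.2.1 := by
  have h : ∀ u, walk u (2 * n) = walk u n + ∑ i : Fin n, if u (n + i.1 + 1) then 1 else -1 := by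
    intro u
    rw [two_mul, walk, Finset.sum_range_add, walk,
      Finset.sum_range (fun x => if u (n + x + 1) then (1 : ℤ) else -1)]
  rw [h, walk_concat_first]
  simp only [extend_concat_second, stepSum]

/-- With probability at least `1 / 576` the walk climbs by `K` and then descends by `K`. -/
lemma walk_count {K n : ℕ} (hK : 1 ≤ K) (hn : n = 2 * K ^ 2) :
    2 ^ (2 * n + 2) ≤ 576 * Nat.card {b : Fin (2 * n + 2) → Bool //
      (K : ℤ) ≤ walk (extendBool b) n ∧ walk (extendBool b) (2 * n) + K ≤ walk (extendBool b) n} := by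
  classical
  have hup := card_upSet hK
  rw [← hn] at hup
  set P := upSet n K ×ˢ downSet n K ×ˢ (Finset.univ : Finset (Bool × Bool)) with hP
  have hcard : P.card = (upSet n K).card * ((upSet n K).card * 4) := by
    rw [hP, Finset.card_product, Finset.card_product, card_downSet]
    rfl
  have hle : P.card ≤ Nat.card {b : Fin (2 * n + 2) → Bool //
      (K : ℤ) ≤ walk (extendBool b) n ∧ walk (extendBool b) (2 * n) + K ≤ walk (extendBool b) n} := by
    rw [Nat.card_eq_fintype_card, Fintype.card_subtype]
    refine Finset.card_le_card_of_injOn concat ?_ (concat_injective.injOn)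
    intro p hp
    simp only [hP, upSet, downSet, Finset.coe_product, Set.mem_prod, Finset.mem_coe,
      Finset.mem_filter, Finset.mem_univ, true_and] at hp
    simp only [Finset.coe_filter, Finset.mem_univ, true_and, Set.mem_ofPred_eq]
    rw [walk_concat_first, walk_concat_second]
    exact ⟨hp.1, by linarith [hp.2.1]⟩
  calc 2 ^ (2 * n + 2) = 2 ^ n * 2 ^ n * 4 := by ring
    _ ≤ (24 * (upSet n K).card) * (24 * (upSet n K).card) * 4 := by gcongr
    _ = 576 * P.card := by rw [hcard]; ring
    _ ≤ _ := by gcongr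

/-! ### Choice of the scale -/

/-- A height of order `|log η|` makes `ρ ^ (-2 K)` small against `η`. -/
lemma exists_height {ρ A : ℝ} (hρ : 1 < ρ) (hA : 0 ≤ A) :
    ∃ C > (0 : ℝ), ∀ η : ℝ, 0 < η → η ≤ Real.exp (-1) →
      ∃ K : ℕ, 1 ≤ K ∧ (K : ℝ) ≤ C * (-Real.log η) ∧ A / ρ ^ (2 * K) < η / 2 := by
  have hl : 0 < Real.log ρ := Real.log_pos hρ
  set G := 2 * A + 1 with hG
  have hG0 : 0 < G := by positivity
  have hGl : 0 ≤ Real.log G := Real.log_nonneg (by linarith)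
  refine ⟨(Real.log G + 1) / (2 * Real.log ρ) + 2, by positivity, fun η hη hη1 => ?_⟩
  set ℓ := -Real.log η with hℓ
  have hℓ1 : 1 ≤ ℓ := by
    have := Real.log_le_log hη hη1
    rw [Real.log_exp] at this
    linarith
  set t := (Real.log G + ℓ) / (2 * Real.log ρ) with ht
  have ht0 : 0 ≤ t := by positivity
  refine ⟨⌈t⌉₊ + 1, by omega, ?_, ?_⟩
  · have h1 := (Nat.ceil_lt_add_one ht0).le
    have h2 : t ≤ (Real.log G + 1) / (2 * Real.log ρ) * ℓ := by
      rw [ht, div_mul_eq_mul_div]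
      gcongr
      nlinarith
    push_cast
    nlinarith
  · set K := ⌈t⌉₊ + 1 with hK
    have h1 : t < K := by
      rw [hK]
      push_cast
      linarith [Nat.le_ceil t]
    rw [ht, div_lt_iff₀ (by positivity)] at h1
    have h2 : G / η < ρ ^ (2 * K) := by
      rw [← Real.log_lt_log_iff (by positivity) (by positivity), Real.log_div hG0.ne' hη.ne',
        Real.log_pow]
      push_cast
      linarith
    rw [div_lt_iff₀ hη] at h2
    rw [div_lt_iff₀ (by positivity)]
    nlinarith

/-- If the configurations with displacements `± s` have Dirichlet energy below `E` for all sign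
patterns in `p`, then at least as many Bernoulli configurations do. For `s = -dmax` the sign
patterns are flipped. -/
lemma card_le_of_walk {q : ℝ → ℝ} {dmax s E : ℝ} (hs : s = dmax ∨ s = -dmax) {L : ℕ}
    {p : (Fin L → Bool) → Prop}
    (h : ∀ b, p b → lamD q L (fun i => if extendBool b i then s else -s) < E) :
    Nat.card {b // p b} ≤
      Nat.card {b : Fin L → Bool // lamD q L (bernoulliConfig dmax b) < E} := by
  have hext : ∀ (b : Fin L → Bool) (i : Fin L), extendBool b i = b i := fun b i => by
    rw [extendBool, dif_pos i.2]
  simp only [hext] at h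
  rcases hs with rfl | rfl
  · exact Nat.card_le_card_of_injective (fun b => ⟨b.1, h b.1 b.2⟩) fun b c hbc =>
      Subtype.ext (congrArg (fun x => x.1) hbc)
  · refine Nat.card_le_card_of_injective (fun b => ⟨fun i => !b.1 i, ?_⟩) fun b c hbc => ?_
    · convert h b.1 b.2 using 2
      ext i
      cases hb : b.1 i <;> simp [bernoulliConfig, hb]
    · refine Subtype.ext (funext fun i => ?_)
      have := congrFun (congrArg (fun x => x.1) hbc) i
      simpa using this

/-- (Finite-volume core of the `1/log²` lower bound for the
IDS of the symmetric Bernoulli displacement model.) There are `c₀, C, ε > 0`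
such that for each `E ∈ (E₀, E₀ + ε)` some length `L ≤ C log²(E - E₀)`
satisfies `ℙ_L(λ_L^D < E) ≥ c₀`, where `ℙ_L` is the uniform measure on the
`2^L` symmetric Bernoulli configurations. -/
theorem statement15 (r dmax : ℝ) (hr0 : 0 < r) (hr : r < 1 / 2)
    (hdmax : dmax = 1 / 2 - r) (q : ℝ → ℝ)
    (hq_meas : Measurable q) (hq_bdd : ∃ M, ∀ x, |q x| ≤ M)
    (hq_supp : ∀ x : ℝ, r < |x| → q x = 0)
    (hq_symm : ∀ x : ℝ, q (-x) = q x)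
    (halt : AltI1 q dmax) :
    ∃ c₀ > (0 : ℝ), ∃ C > (0 : ℝ), ∃ ε > (0 : ℝ), ∀ E : ℝ,
      GroundEnergy1 q dmax < E → E < GroundEnergy1 q dmax + ε →
      ∃ L : ℕ, 1 ≤ L ∧ (L : ℝ) ≤ C * (Real.log (E - GroundEnergy1 q dmax)) ^ 2 ∧
        c₀ ≤ (Nat.card {b : Fin L → Bool // lamD q L (bernoulliConfig dmax b) < E} : ℝ)
          / 2 ^ L := by
  obtain ⟨M, hM⟩ := hq_bdd
  obtain ⟨halt1, halt2, halt3⟩ := halt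
  have hd0 : 0 < dmax := by linarith
  set e := E0fun1 q dmax with he
  set E₀ := GroundEnergy1 q dmax with hE₀
  have hlt : e < E0fun1 q 0 := halt3 0 (by rwa [abs_zero])
  have heE : e ≤ E₀ := by
    refine groundEnergy_ge hr hdmax hq_meas hM hq_supp fun a ha => ?_
    rcases ha.lt_or_eq with h | h
    · exact (halt3 a h).le
    · rcases (abs_eq hd0.le).1 h with rfl | rfl
      · exact le_rfl
      · exact halt2.le
  obtain ⟨ρ, hρ, B, hB, δ₀, hδ₀, hprof⟩ :=
    good_profile hr0 hr hdmax hq_meas hM hq_supp hq_symm hlt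
  have hn0 : 0 ≤ sqNorm tau (-(1 / 2)) (1 / 2) := sqNorm_nonneg _ (by norm_num)
  set T := |QForm (fun _ => M) tau (-(1 / 2)) (1 / 2)| +
    |e| * sqNorm tau (-(1 / 2)) (1 / 2) with hT
  have hT0 : 0 ≤ T := by positivity
  obtain ⟨C, hC, hheight⟩ := exists_height (A := 2 * T * B ^ 2) hρ (by positivity)
  refine ⟨1 / 576, by norm_num, 6 * C ^ 2, by positivity, min δ₀ (Real.exp (-1)),
    lt_min hδ₀ (Real.exp_pos _), fun E hE hE' => ?_⟩
  set η := E - E₀ with hη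
  have hη0 : 0 < η := by linarith
  have hη1 : η < min δ₀ (Real.exp (-1)) := by linarith
  obtain ⟨s, hs, f, hf, hfpos, hf1, hfQ, hfB, hfρ⟩ := hprof (η / 2) (by linarith)
    (by linarith [min_le_left δ₀ (Real.exp (-1))])
  obtain ⟨K, hK1, hKC, hKη⟩ := hheight η hη0 (hη1.le.trans (min_le_right _ _))
  set n := 2 * K ^ 2 with hn
  have hnpos : 0 < n := by positivity
  refine ⟨2 * n + 2, by omega, ?_, ?_⟩
  · have hK1' : (1 : ℝ) ≤ K := by exact_mod_cast hK1
    have h1 : (K : ℝ) ^ 2 ≤ (C * (-Real.log η)) ^ 2 := by gcongr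
    rw [hn]
    push_cast
    nlinarith
  · have habs : |s| ≤ dmax := by
      rcases hs with rfl | rfl
      · exact (abs_of_pos hd0).le
      · rw [abs_neg]
        exact (abs_of_pos hd0).le
    have hTe : QForm (fun _ => M) tau (-(1 / 2)) (1 / 2) ≤
        (e + η / 2) * sqNorm tau (-(1 / 2)) (1 / 2) + T := by
      rw [hT]
      nlinarith [le_abs_self (QForm (fun _ => M) tau (-(1 / 2)) (1 / 2)), neg_abs_le e]
    have hcard := card_le_of_walk (q := q) (E := E) hs
      (p := fun b : Fin (2 * n + 2) → Bool => (K : ℤ) ≤ walk (extendBool b) n ∧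
        walk (extendBool b) (2 * n) + K ≤ walk (extendBool b) n) fun b hb => by
      have hm : n - 1 + 1 = n := by omega
      have := lamD_walk hdmax hq_meas hM hq_supp hq_symm habs hf hfpos hf1 hfQ hfB hρ hfρ hT0 hTe
        (N := 2 * n) (m := n - 1) (by omega) (extendBool b) (by rw [hm]; exact hb.1)
        (by rw [hm]; exact hb.2)
      linarith
    have hcount := (walk_count hK1 hn).trans (Nat.mul_le_mul_left 576 hcard)
    rw [le_div_iff₀ (by positivity), one_div, inv_mul_le_iff₀ (by norm_num)]
    exact_mod_cast hcount
end
end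

section
/- Let d ≥ 1, let V ∈ L^∞(ℝ^d) be real-valued, and let φ ∈ C¹(ℝ^d) be positive and a weak solution of −Δφ + Vφ = 0, in the sense that ∫_{ℝ^d} (∇φ(x)·∇η(x) + V(x)φ(x)η(x)) dx = 0 for every compactly supported C¹ function η : ℝ^d → ℝ. Then for every ψ ∈ C_c^∞(ℝ^d), ∫_{ℝ^d} (‖∇ψ(x)‖² + V(x)ψ(x)²) dx ≥ 0; in particular the variational ground-state energy inf over nonzero ψ ∈ C_c^∞(ℝ^d) of (∫ (‖∇ψ‖² + Vψ²))/(∫ ψ²) is nonnegative. -/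
/-!
Test the weak equation against `η = ψ² / φ`, which is `C¹` and compactly supported because `φ` is
`C¹` and positive. Completing the square gives the pointwise (Picone) inequality
`∇φ · ∇η = ‖∇ψ‖² - ‖∇ψ - (ψ/φ) ∇φ‖² ≤ ‖∇ψ‖²`, while `V φ η = V ψ²`. Integrating,
`0 = ∫ (∇φ · ∇η + V φ η) ≤ ∫ (‖∇ψ‖² + V ψ²)`. Both integrands are integrable, since they are sums of
continuous compactly supported functions and bounded multiples of such functions.
-/

open MeasureTheory Set

noncomputable section

/-- Points of `ℝ^d`. -/
abbrev Pt (d : ℕ) := EuclideanSpace ℝ (Fin d)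

/-- The dual norm on `ℝ^d` computed in the standard orthonormal basis. -/
lemma norm_sq_dual_eq_sum {d : ℕ} (L : Pt d →L[ℝ] ℝ) :
    ‖L‖ ^ 2 = ∑ k : Fin d, L (EuclideanSpace.single k 1) ^ 2 := by
  have h1 : ‖(InnerProductSpace.toDual ℝ (Pt d)).symm L‖ = ‖L‖ :=
    LinearIsometryEquiv.norm_map _ _
  rw [← h1, EuclideanSpace.norm_sq_eq]
  refine Finset.sum_congr rfl fun k _ => ?_
  have h2 := InnerProductSpace.toDual_symm_apply (𝕜 := ℝ)
    (x := EuclideanSpace.single k (1 : ℝ)) (y := L)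
  rw [← h2, EuclideanSpace.inner_single_right]
  simp

lemma fderiv_sq_div_apply {d : ℕ} {φ ψ : Pt d → ℝ} {x : Pt d} (hφ : DifferentiableAt ℝ φ x)
    (hψ : DifferentiableAt ℝ ψ x) (h0 : φ x ≠ 0) (v : Pt d) :
    fderiv ℝ (fun y => ψ y ^ 2 / φ y) x v =
      2 * (ψ x / φ x) * fderiv ℝ ψ x v - (ψ x / φ x) ^ 2 * fderiv ℝ φ x v := by
  have h : HasFDerivAt (fun y => ψ y ^ 2 * (φ y)⁻¹) _ x :=
    (hψ.hasFDerivAt.pow 2).mul ((hasDerivAt_inv h0).comp_hasFDerivAt x hφ.hasFDerivAt)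
  simp only [div_eq_mul_inv]
  rw [h.fderiv]
  simp
  field_simp
  ring

lemma integrable_bounded_mul {d : ℕ} {V g : Pt d → ℝ} (hV : Measurable V)
    (hb : ∃ M, ∀ x, |V x| ≤ M) (hg : Continuous g) (hc : HasCompactSupport g) :
    Integrable (fun x => V x * g x) := by
  obtain ⟨M, hM⟩ := hb
  exact (hg.integrable_of_hasCompactSupport hc).bdd_mul (c := M) hV.aestronglyMeasurable
    (Filter.Eventually.of_forall hM)

lemma form_nonneg {d : ℕ} {V : Pt d → ℝ}
    (hVmeas : Measurable V) (hVbdd : ∃ M, ∀ x, |V x| ≤ M)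
    {φ : Pt d → ℝ} (hφC1 : ContDiff ℝ 1 φ) (hφpos : ∀ x, 0 < φ x)
    (hweak : ∀ η : Pt d → ℝ, ContDiff ℝ 1 η → HasCompactSupport η →
      ∫ x, ((∑ k : Fin d, fderiv ℝ φ x (EuclideanSpace.single k 1) *
          fderiv ℝ η x (EuclideanSpace.single k 1)) + V x * φ x * η x) = 0)
    {ψ : Pt d → ℝ} (hψ : ContDiff ℝ 1 ψ) (hψc : HasCompactSupport ψ) :
    0 ≤ ∫ x, (‖fderiv ℝ ψ x‖ ^ 2 + V x * ψ x ^ 2) := by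
  have hη : ContDiff ℝ 1 (fun y => ψ y ^ 2 / φ y) :=
    (hψ.pow 2).div hφC1 fun x => (hφpos x).ne'
  have hψ2c : HasCompactSupport (fun y => ψ y ^ 2) :=
    hψc.comp_left (g := fun t : ℝ => t ^ 2) (by simp)
  have hηc : HasCompactSupport (fun y => ψ y ^ 2 / φ y) :=
    hψc.mono fun x hx h => hx (by simp [h])
  have hVψ : Integrable (fun x => V x * ψ x ^ 2) :=
    integrable_bounded_mul hVmeas hVbdd (hψ.continuous.pow 2) hψ2c
  have hDψ : Integrable (fun x => ‖fderiv ℝ ψ x‖ ^ 2) := by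
    refine Continuous.integrable_of_hasCompactSupport
      ((hψ.continuous_fderiv one_ne_zero).norm.pow 2) ?_
    exact (hψc.fderiv (𝕜 := ℝ)).comp_left (g := fun L : Pt d →L[ℝ] ℝ => ‖L‖ ^ 2) (by simp)
  have hDη : Integrable (fun x => ∑ k : Fin d, fderiv ℝ φ x (EuclideanSpace.single k 1) *
      fderiv ℝ (fun y => ψ y ^ 2 / φ y) x (EuclideanSpace.single k 1)) := by
    refine integrable_finsetSum _ fun k _ => ?_
    refine Continuous.integrable_of_hasCompactSupport
      (((hφC1.continuous_fderiv one_ne_zero).clm_apply continuous_const).mul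
        ((hη.continuous_fderiv one_ne_zero).clm_apply continuous_const)) ?_
    exact (hηc.fderiv_apply (𝕜 := ℝ) (EuclideanSpace.single k 1)).mul_left
  have hcancel : ∀ x, V x * φ x * (ψ x ^ 2 / φ x) = V x * ψ x ^ 2 := fun x => by
    have := (hφpos x).ne'
    field_simp
  have h := hweak _ hη hηc
  simp only [hcancel] at h
  rw [← h]
  refine integral_mono (hDη.add hVψ) (hDψ.add hVψ) fun x => ?_
  simp only [norm_sq_dual_eq_sum]
  gcongr with k
  -- The difference of the two sides is the square of the `k`-th component of `∇ψ - (ψ/φ) ∇φ`.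
  rw [fderiv_sq_div_apply (hφC1.differentiable one_ne_zero x) (hψ.differentiable one_ne_zero x)
    (hφpos x).ne']
  linarith [sq_nonneg (fderiv ℝ ψ x (EuclideanSpace.single k 1) -
    ψ x / φ x * fderiv ℝ φ x (EuclideanSpace.single k 1))]


/-- Allegretto–Piepenbrink / ground-state transform: if
`V ∈ L^∞(ℝ^d)` admits a positive `C¹` weak solution `φ` of `-Δφ + Vφ = 0`,
then the quadratic form of `-Δ + V` is nonnegative on `C_c^∞(ℝ^d)`; in
particular the variational ground-state energy is nonnegative. -/
theorem statement19 (d : ℕ) (hd : 1 ≤ d) (V : Pt d → ℝ)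
    (hVmeas : Measurable V) (hVbdd : ∃ M, ∀ x, |V x| ≤ M)
    (φ : Pt d → ℝ) (hφC1 : ContDiff ℝ 1 φ) (hφpos : ∀ x, 0 < φ x)
    (hweak : ∀ η : Pt d → ℝ, ContDiff ℝ 1 η → HasCompactSupport η →
      ∫ x, ((∑ k : Fin d, fderiv ℝ φ x (EuclideanSpace.single k 1) *
          fderiv ℝ η x (EuclideanSpace.single k 1)) + V x * φ x * η x) = 0) :
    (∀ ψ : Pt d → ℝ, ContDiff ℝ (⊤ : ℕ∞) ψ → HasCompactSupport ψ →
      0 ≤ ∫ x, (‖fderiv ℝ ψ x‖ ^ 2 + V x * ψ x ^ 2)) ∧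
    0 ≤ sInf {e | ∃ ψ : Pt d → ℝ, ContDiff ℝ (⊤ : ℕ∞) ψ ∧ HasCompactSupport ψ ∧ ψ ≠ 0 ∧
      e = (∫ x, (‖fderiv ℝ ψ x‖ ^ 2 + V x * ψ x ^ 2)) / ∫ x, ψ x ^ 2} := by
  have key : ∀ ψ : Pt d → ℝ, ContDiff ℝ (⊤ : ℕ∞) ψ → HasCompactSupport ψ →
      0 ≤ ∫ x, (‖fderiv ℝ ψ x‖ ^ 2 + V x * ψ x ^ 2) := fun ψ hψ hψc =>
    form_nonneg hVmeas hVbdd hφC1 hφpos hweak (hψ.of_le (by exact_mod_cast le_top)) hψc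
  refine ⟨key, Real.sInf_nonneg ?_⟩
  rintro e ⟨ψ, hψ, hψc, -, rfl⟩
  exact div_nonneg (key ψ hψ hψc) (integral_nonneg fun x => sq_nonneg _)
end
end
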